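/- arXiv:math/0611901 — 3 statements merged into one kernel-verified Lean document; each statement's English description precedes it below -/
import Mathlib

section
/- Let n ≥ 1 and N ≥ 1 be integers. There exists a constant c = c(N,n) with the following property: for every ball B = B(x₀, r₀) ⊆ ℝⁿ and every f ∈ L¹(2B) there is a set E ⊆ B of Lebesgue measure zero such that for all x, y ∈ B ∖ E one has |f(x) − f(y)| ≤ c · |x − y| · ( 𝔐_{|x−y|,N} f(x) + 𝔐_{|x−y|,N} f(y) ), where for z ∈ B and ρ > 0, 𝔐_{ρ,N} f(z) := max_{1≤j≤n} sup { |∫_{2B} f ∂_j φ dm| : 0 < r' ≤ ρ, φ ∈ A_N(B(z,r')) }. -/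
open MeasureTheory Metric Set ENNReal NNReal

noncomputable section

/-- The partial derivative `∂_j φ` in the `j`-th coordinate direction. -/
def pderivIdx (n : ℕ) (j : Fin n) (φ : EuclideanSpace ℝ (Fin n) → ℝ)
    (x : EuclideanSpace ℝ (Fin n)) : ℝ :=
  fderiv ℝ φ x (EuclideanSpace.single j 1)

/-- The multi-index partial derivative `∂^α φ`. -/
def multiPartial (n : ℕ) (α : Fin n → ℕ) (φ : EuclideanSpace ℝ (Fin n) → ℝ) :
    EuclideanSpace ℝ (Fin n) → ℝ :=
  (List.finRange n).foldr (fun j ψ => (pderivIdx n j)^[α j] ψ) φ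

/-- The class `A_N(B(z,r'))` of smooth test functions supported in `B(z,r')` with
`|∂^α φ| ≤ r'^{-n-|α|}` for every multi-index `α` with `|α| ≤ N`. -/
def memTestClass (n N : ℕ) (z : EuclideanSpace ℝ (Fin n)) (r' : ℝ)
    (φ : EuclideanSpace ℝ (Fin n) → ℝ) : Prop :=
  ContDiff ℝ (⊤ : ℕ∞) φ ∧ tsupport φ ⊆ ball z r' ∧
    ∀ α : Fin n → ℕ, (∑ j, α j) ≤ N →
      ∀ x, |multiPartial n α φ x| ≤ (r'⁻¹) ^ (n + ∑ j, α j)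

/-- The local grand maximal function of the (distributional) gradient of `f`:
`𝔐_{ρ,N} f(z) = max_j sup { |∫_S f ∂_j φ| : 0 < r' ≤ ρ, φ ∈ A_N(B(z,r')) }`. -/
def grandMaxOn (n N : ℕ) (S : Set (EuclideanSpace ℝ (Fin n)))
    (f : EuclideanSpace ℝ (Fin n) → ℝ) (ρ : ℝ) (z : EuclideanSpace ℝ (Fin n)) : ℝ≥0∞ :=
  ⨆ j : Fin n, ⨆ (r' : {s : ℝ // 0 < s ∧ s ≤ ρ}),
    ⨆ (φ : {φ : EuclideanSpace ℝ (Fin n) → ℝ // memTestClass n N z r'.1 φ}),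
      ENNReal.ofReal |∫ y in S, f y * pderivIdx n j φ.1 y|

lemma contDiff_pderivIdx {n : ℕ} (j : Fin n) {φ : EuclideanSpace ℝ (Fin n) → ℝ}
    (h : ContDiff ℝ (⊤ : ℕ∞) φ) : ContDiff ℝ (⊤ : ℕ∞) (pderivIdx n j φ) := by
  unfold pderivIdx
  have h1 : ContDiff ℝ (⊤ : ℕ∞) (fderiv ℝ φ) := h.fderiv_right (by simp)
  exact h1.clm_apply contDiff_const

lemma hasCompactSupport_pderivIdx {n : ℕ} (j : Fin n) {φ : EuclideanSpace ℝ (Fin n) → ℝ}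
    (h : HasCompactSupport φ) : HasCompactSupport (pderivIdx n j φ) := by
  unfold pderivIdx
  exact h.fderiv_apply (𝕜 := ℝ) _

lemma iterate_good {n : ℕ} (j : Fin n) (m : ℕ) {φ : EuclideanSpace ℝ (Fin n) → ℝ}
    (h : ContDiff ℝ (⊤ : ℕ∞) φ ∧ HasCompactSupport φ) :
    ContDiff ℝ (⊤ : ℕ∞) ((pderivIdx n j)^[m] φ) ∧ HasCompactSupport ((pderivIdx n j)^[m] φ) := by
  induction m with
  | zero => simpa using h
  | succ m ih =>
    rw [Function.iterate_succ_apply']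
    exact ⟨contDiff_pderivIdx j ih.1, hasCompactSupport_pderivIdx j ih.2⟩

lemma foldr_good {n : ℕ} (α : Fin n → ℕ) (l : List (Fin n)) {φ : EuclideanSpace ℝ (Fin n) → ℝ}
    (h : ContDiff ℝ (⊤ : ℕ∞) φ ∧ HasCompactSupport φ) :
    ContDiff ℝ (⊤ : ℕ∞) (l.foldr (fun j ψ => (pderivIdx n j)^[α j] ψ) φ) ∧
      HasCompactSupport (l.foldr (fun j ψ => (pderivIdx n j)^[α j] ψ) φ) := by
  induction l with
  | nil => simpa using h
  | cons a l ih => simpa only [List.foldr_cons] using iterate_good a (α a) ih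

lemma exists_bound_multiPartial {n : ℕ} (N : ℕ) {φ : EuclideanSpace ℝ (Fin n) → ℝ}
    (h1 : ContDiff ℝ (⊤ : ℕ∞) φ) (h2 : HasCompactSupport φ) :
    ∃ C : ℝ, 0 ≤ C ∧ ∀ α : Fin n → ℕ, (∑ j, α j) ≤ N → ∀ x, |multiPartial n α φ x| ≤ C := by
  have h : ∀ α : Fin n → ℕ, ∃ C : ℝ, ∀ x, ‖multiPartial n α φ x‖ ≤ C := by
    intro α
    have := foldr_good α (List.finRange n) ⟨h1, h2⟩
    exact this.2.exists_bound_of_continuous this.1.continuous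
  choose C hC using h
  have hfin : {α : Fin n → ℕ | (∑ j, α j) ≤ N}.Finite := by
    refine (Set.finite_Iic (fun _ : Fin n => N)).subset ?_
    intro α hα j
    exact (Finset.single_le_sum (f := α) (fun i _ => Nat.zero_le _) (Finset.mem_univ j)).trans hα
  obtain ⟨D, hD⟩ := (hfin.image C).bddAbove
  refine ⟨max D 0, le_max_right _ _, fun α hα x => ?_⟩
  exact (hC α x).trans ((hD ⟨α, hα, rfl⟩).trans (le_max_left _ _))

/-- Affine change of variables for a single partial derivative. -/
lemma pderivIdx_affine {n : ℕ} (j : Fin n) {h₁ h₂ : EuclideanSpace ℝ (Fin n) → ℝ}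
    (H₁ : ContDiff ℝ (⊤ : ℕ∞) h₁) (H₂ : ContDiff ℝ (⊤ : ℕ∞) h₂)
    (a b t : ℝ) (x v : EuclideanSpace ℝ (Fin n)) :
    pderivIdx n j (fun z => a * h₁ (t • (z - x) - v) + b * h₂ (t • (z - x) - v)) =
      fun z => (a * t) * pderivIdx n j h₁ (t • (z - x) - v) +
        (b * t) * pderivIdx n j h₂ (t • (z - x) - v) := by
  funext z
  have hq : HasFDerivAt (fun z : EuclideanSpace ℝ (Fin n) => t • (z - x) - v)
      (t • ContinuousLinearMap.id ℝ (EuclideanSpace ℝ (Fin n))) z :=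
    (((hasFDerivAt_id z).sub_const x).const_smul t).sub_const v
  have d1 := ((H₁.differentiable (by simp)) (t • (z - x) - v)).hasFDerivAt.comp z hq
  have d2 := ((H₂.differentiable (by simp)) (t • (z - x) - v)).hasFDerivAt.comp z hq
  have d := (d1.const_mul a).add (d2.const_mul b)
  unfold pderivIdx
  have := d.fderiv
  simp only [Function.comp_def] at this
  erw [this]
  simp
  ring

lemma iterate_affine {n : ℕ} (j : Fin n) (m : ℕ) {h₁ h₂ : EuclideanSpace ℝ (Fin n) → ℝ}
    (H₁ : ContDiff ℝ (⊤ : ℕ∞) h₁ ∧ HasCompactSupport h₁)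
    (H₂ : ContDiff ℝ (⊤ : ℕ∞) h₂ ∧ HasCompactSupport h₂)
    (a b t : ℝ) (x v : EuclideanSpace ℝ (Fin n)) :
    (pderivIdx n j)^[m] (fun z => a * h₁ (t • (z - x) - v) + b * h₂ (t • (z - x) - v)) =
      fun z => (a * t ^ m) * (pderivIdx n j)^[m] h₁ (t • (z - x) - v) +
        (b * t ^ m) * (pderivIdx n j)^[m] h₂ (t • (z - x) - v) := by
  induction m with
  | zero => simp
  | succ m ih =>
    rw [Function.iterate_succ_apply', ih,
      pderivIdx_affine j (iterate_good j m H₁).1 (iterate_good j m H₂).1]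
    simp only [Function.iterate_succ_apply', pow_succ, mul_assoc]

lemma foldr_affine {n : ℕ} (α : Fin n → ℕ) (l : List (Fin n))
    {h₁ h₂ : EuclideanSpace ℝ (Fin n) → ℝ}
    (H₁ : ContDiff ℝ (⊤ : ℕ∞) h₁ ∧ HasCompactSupport h₁)
    (H₂ : ContDiff ℝ (⊤ : ℕ∞) h₂ ∧ HasCompactSupport h₂)
    (a b t : ℝ) (x v : EuclideanSpace ℝ (Fin n)) :
    l.foldr (fun j ψ => (pderivIdx n j)^[α j] ψ)
        (fun z => a * h₁ (t • (z - x) - v) + b * h₂ (t • (z - x) - v)) =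
      fun z => (a * t ^ (l.map α).sum) *
          l.foldr (fun j ψ => (pderivIdx n j)^[α j] ψ) h₁ (t • (z - x) - v) +
        (b * t ^ (l.map α).sum) *
          l.foldr (fun j ψ => (pderivIdx n j)^[α j] ψ) h₂ (t • (z - x) - v) := by
  induction l with
  | nil => simp
  | cons i l ih =>
    rw [List.foldr_cons, ih, iterate_affine i (α i) (foldr_good α l H₁) (foldr_good α l H₂)]
    simp only [List.foldr_cons, List.map_cons, List.sum_cons]
    funext z
    ring

lemma multiPartial_affine {n : ℕ} (α : Fin n → ℕ) {h₁ h₂ : EuclideanSpace ℝ (Fin n) → ℝ}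
    (H₁ : ContDiff ℝ (⊤ : ℕ∞) h₁ ∧ HasCompactSupport h₁)
    (H₂ : ContDiff ℝ (⊤ : ℕ∞) h₂ ∧ HasCompactSupport h₂)
    (a b t : ℝ) (x v z : EuclideanSpace ℝ (Fin n)) :
    multiPartial n α (fun z => a * h₁ (t • (z - x) - v) + b * h₂ (t • (z - x) - v)) z =
      t ^ (∑ j, α j) * (a * multiPartial n α h₁ (t • (z - x) - v) +
        b * multiPartial n α h₂ (t • (z - x) - v)) := by
  have hs : ((List.finRange n).map α).sum = ∑ j, α j := by
    rw [← List.ofFn_eq_map, List.sum_ofFn]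
  unfold multiPartial
  rw [foldr_affine α _ H₁ H₂, hs]
  ring

/-- The coordinate multiplied bump. -/
def coordMul (n : ℕ) (ψ : EuclideanSpace ℝ (Fin n) → ℝ) (j : Fin n)
    (u : EuclideanSpace ℝ (Fin n)) : ℝ := u j * ψ u

lemma coordMul_good {n : ℕ} {ψ : EuclideanSpace ℝ (Fin n) → ℝ} (j : Fin n)
    (H : ContDiff ℝ (⊤ : ℕ∞) ψ ∧ HasCompactSupport ψ) :
    ContDiff ℝ (⊤ : ℕ∞) (coordMul n ψ j) ∧ HasCompactSupport (coordMul n ψ j) := by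
  constructor
  · unfold coordMul
    have := H.1
    fun_prop
  · exact H.2.mul_left (f := fun u : EuclideanSpace ℝ (Fin n) => u j)

lemma pderivIdx_coordMul {n : ℕ} {ψ : EuclideanSpace ℝ (Fin n) → ℝ} (j : Fin n)
    (H : ContDiff ℝ (⊤ : ℕ∞) ψ) (u : EuclideanSpace ℝ (Fin n)) :
    pderivIdx n j (coordMul n ψ j) u = ψ u + u j * pderivIdx n j ψ u := by
  have d1 : HasFDerivAt (fun u : EuclideanSpace ℝ (Fin n) => u j)
      (EuclideanSpace.proj j : EuclideanSpace ℝ (Fin n) →L[ℝ] ℝ) u :=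
    (EuclideanSpace.proj j : EuclideanSpace ℝ (Fin n) →L[ℝ] ℝ).hasFDerivAt
  have d2 := ((H.differentiable (by simp)) u).hasFDerivAt
  have d := (d1.mul d2).fderiv
  unfold pderivIdx
  have e : coordMul n ψ j = (fun u : EuclideanSpace ℝ (Fin n) => u j) * ψ := rfl
  rw [e, d]
  simp
  ring

lemma fderiv_apply_eq_sum {n : ℕ} (ψ : EuclideanSpace ℝ (Fin n) → ℝ)
    (u w : EuclideanSpace ℝ (Fin n)) :
    fderiv ℝ ψ u w = ∑ j, w j * pderivIdx n j ψ u := by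
  unfold pderivIdx
  have : w = ∑ j, w j • (EuclideanSpace.single j (1 : ℝ) : EuclideanSpace ℝ (Fin n)) := by
    ext i
    simp [Finset.sum_apply, Pi.single_apply]
  conv_lhs => rw [this]
  simp

/-- The vector field components. -/
def vf (n : ℕ) (ψ : EuclideanSpace ℝ (Fin n) → ℝ) (x v : EuclideanSpace ℝ (Fin n)) (s : ℝ)
    (j : Fin n) (z : EuclideanSpace ℝ (Fin n)) : ℝ :=
  (s⁻¹) ^ n * coordMul n ψ j (s⁻¹ • (z - x) - v) + ((s⁻¹) ^ n * v j) * ψ (s⁻¹ • (z - x) - v)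

/-- Rescaled kernel. -/
def ker (n : ℕ) (ψ : EuclideanSpace ℝ (Fin n) → ℝ) (x v : EuclideanSpace ℝ (Fin n)) (s : ℝ)
    (z : EuclideanSpace ℝ (Fin n)) : ℝ := (s⁻¹) ^ n * ψ (s⁻¹ • (z - x) - v)

lemma pderivIdx_vf {n : ℕ} {ψ : EuclideanSpace ℝ (Fin n) → ℝ}
    (H : ContDiff ℝ (⊤ : ℕ∞) ψ ∧ HasCompactSupport ψ) (x v : EuclideanSpace ℝ (Fin n)) (s : ℝ)
    (j : Fin n) (z : EuclideanSpace ℝ (Fin n)) :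
    pderivIdx n j (vf n ψ x v s j) z =
      (s⁻¹) ^ (n + 1) * (pderivIdx n j (coordMul n ψ j) (s⁻¹ • (z - x) - v) +
        v j * pderivIdx n j ψ (s⁻¹ • (z - x) - v)) := by
  unfold vf
  rw [pderivIdx_affine j (coordMul_good j H).1 H.1]
  ring

lemma hasDerivAt_ker {n : ℕ} {ψ : EuclideanSpace ℝ (Fin n) → ℝ}
    (H : ContDiff ℝ (⊤ : ℕ∞) ψ ∧ HasCompactSupport ψ) (x v : EuclideanSpace ℝ (Fin n)) {s : ℝ}
    (hs : 0 < s) (z : EuclideanSpace ℝ (Fin n)) :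
    HasDerivAt (fun s => ker n ψ x v s z) (- ∑ j, pderivIdx n j (vf n ψ x v s j) z) s := by
  have hi : HasDerivAt (fun s : ℝ => s⁻¹) (-(s ^ 2)⁻¹) s := hasDerivAt_inv hs.ne'
  have hq : HasDerivAt (fun s : ℝ => s⁻¹ • (z - x) - v) ((-(s ^ 2)⁻¹) • (z - x)) s :=
    (hi.smul_const (z - x)).sub_const v
  have d1 := ((H.1.differentiable (by simp)) (s⁻¹ • (z - x) - v)).hasFDerivAt.comp_hasDerivAt s hq
  have d := (hi.pow n).mul d1
  refine HasDerivAt.congr_deriv (f := fun s => ker n ψ x v s z) d ?_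
  simp only [pderivIdx_vf H, pderivIdx_coordMul _ H.1, ← Finset.mul_sum]
  have e : ∑ j, (ψ (s⁻¹ • (z - x) - v) + (s⁻¹ • (z - x) - v) j *
      pderivIdx n j ψ (s⁻¹ • (z - x) - v) + v j * pderivIdx n j ψ (s⁻¹ • (z - x) - v)) =
      n * ψ (s⁻¹ • (z - x) - v) + s⁻¹ * fderiv ℝ ψ (s⁻¹ • (z - x) - v) (z - x) := by
    rw [fderiv_apply_eq_sum, Finset.mul_sum]
    simp only [Finset.sum_add_distrib, Finset.sum_const, Finset.card_univ, Fintype.card_fin,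
      nsmul_eq_mul, add_assoc]
    congr 1
    rw [← Finset.sum_add_distrib]
    refine Finset.sum_congr rfl fun j _ => ?_
    simp
    ring
  rw [e, map_smul]
  simp only [Function.comp_def, smul_eq_mul, Pi.pow_apply]
  rcases n with _ | n
  · simp; ring
  · simp only [Nat.add_sub_cancel]
    rw [← inv_pow]
    generalize s⁻¹ = t
    ring

lemma contDiff_vf {n : ℕ} {ψ : EuclideanSpace ℝ (Fin n) → ℝ}
    (H : ContDiff ℝ (⊤ : ℕ∞) ψ ∧ HasCompactSupport ψ) (x v : EuclideanSpace ℝ (Fin n)) (s : ℝ)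
    (j : Fin n) : ContDiff ℝ (⊤ : ℕ∞) (vf n ψ x v s j) := by
  unfold vf
  have h1 := (coordMul_good j H).1
  have h2 := H.1
  have hq : ContDiff ℝ (⊤ : ℕ∞) (fun z : EuclideanSpace ℝ (Fin n) => s⁻¹ • (z - x) - v) := by
    fun_prop
  exact (contDiff_const.mul (h1.comp hq)).add (contDiff_const.mul (h2.comp hq))

lemma abs_coord_le {n : ℕ} (v : EuclideanSpace ℝ (Fin n)) (j : Fin n) : |v j| ≤ ‖v‖ := by
  simpa using PiLp.norm_apply_le v j

lemma ker_arg_far {n : ℕ} {x v z : EuclideanSpace ℝ (Fin n)} {s : ℝ} (hs : 0 < s)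
    (hv : ‖v‖ ≤ 1 / 2) (hz : s⁻¹ • (z - x) - v ∈ closedBall (0 : EuclideanSpace ℝ (Fin n)) (1 / 4)) :
    z ∈ closedBall x (3 / 4 * s) := by
  rw [mem_closedBall_zero_iff] at hz
  rw [mem_closedBall, dist_eq_norm]
  have h1 : ‖s⁻¹ • (z - x)‖ ≤ 3 / 4 := by
    have := norm_add_le (s⁻¹ • (z - x) - v) v
    rw [sub_add_cancel] at this
    linarith
  rw [norm_smul, norm_inv, Real.norm_of_nonneg hs.le, inv_mul_le_iff₀ hs] at h1
  linarith

lemma memTestClass_vf {n N : ℕ} {ψ : EuclideanSpace ℝ (Fin n) → ℝ}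
    (H : ContDiff ℝ (⊤ : ℕ∞) ψ ∧ HasCompactSupport ψ)
    (hsupp : tsupport ψ ⊆ closedBall 0 (1 / 4))
    {C : ℝ} (hC : 0 < C)
    (hb : ∀ (j : Fin n) (α : Fin n → ℕ), (∑ i, α i) ≤ N → ∀ u,
      |multiPartial n α (coordMul n ψ j) u| + |multiPartial n α ψ u| ≤ C)
    (x v : EuclideanSpace ℝ (Fin n)) (hv : ‖v‖ ≤ 1 / 2) {s : ℝ} (hs : 0 < s) (j : Fin n) :
    memTestClass n N x s (fun z => C⁻¹ * vf n ψ x v s j z) := by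
  refine ⟨contDiff_const.mul (contDiff_vf H x v s j), ?_, ?_⟩
  · refine (closure_minimal (t := closedBall x (3 / 4 * s)) ?_ isClosed_closedBall).trans
      (closedBall_subset_ball (by linarith))
    intro z hz
    by_contra hcon
    apply hz
    have : ψ (s⁻¹ • (z - x) - v) = 0 := by
      by_contra hne
      exact hcon (ker_arg_far hs hv (hsupp (subset_tsupport _ hne)))
    simp [vf, coordMul, this]
  · intro α hα z
    have e : (fun z => C⁻¹ * vf n ψ x v s j z) = fun z =>
        (C⁻¹ * (s⁻¹) ^ n) * coordMul n ψ j (s⁻¹ • (z - x) - v) +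
        (C⁻¹ * (s⁻¹) ^ n * v j) * ψ (s⁻¹ • (z - x) - v) := by
      funext z
      unfold vf
      ring
    rw [e, multiPartial_affine α (coordMul_good j H) H]
    set q := s⁻¹ • (z - x) - v
    have h1 := hb j α hα q
    have hvj : |v j| ≤ 1 := (abs_coord_le v j).trans (by linarith)
    have h2 : |multiPartial n α (coordMul n ψ j) q + v j * multiPartial n α ψ q| ≤ C := by
      refine (abs_add_le _ _).trans (le_trans ?_ h1)
      rw [abs_mul]
      gcongr
      exact mul_le_of_le_one_left (abs_nonneg _) hvj
    have e2 : s⁻¹ ^ (∑ j, α j) * (C⁻¹ * s⁻¹ ^ n * multiPartial n α (coordMul n ψ j) q +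
        C⁻¹ * s⁻¹ ^ n * v j * multiPartial n α ψ q) = s⁻¹ ^ (n + ∑ j, α j) * (C⁻¹ *
        (multiPartial n α (coordMul n ψ j) q + v j * multiPartial n α ψ q)) := by
      rw [pow_add]; ring
    rw [e2, abs_mul, abs_of_nonneg (by positivity : 0 ≤ s⁻¹ ^ (n + ∑ j, α j))]
    refine mul_le_of_le_one_right (by positivity) ?_
    rw [abs_mul, abs_of_pos (inv_pos.2 hC), inv_mul_le_iff₀ hC]
    simpa using h2

lemma exists_bound_pderiv_vf {n : ℕ} {ψ : EuclideanSpace ℝ (Fin n) → ℝ}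
    (H : ContDiff ℝ (⊤ : ℕ∞) ψ ∧ HasCompactSupport ψ) (x v : EuclideanSpace ℝ (Fin n)) :
    ∃ D : ℝ, 0 ≤ D ∧ ∀ s : ℝ, 0 < s → ∀ j z,
      |pderivIdx n j (vf n ψ x v s j) z| ≤ (s⁻¹) ^ (n + 1) * D := by
  have h : ∀ j : Fin n, ∃ D : ℝ, ∀ u, ‖pderivIdx n j (coordMul n ψ j) u + v j * pderivIdx n j ψ u‖ ≤ D := by
    intro j
    have h1 := coordMul_good j H
    have hc : HasCompactSupport (fun u => v j * pderivIdx n j ψ u) :=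
      (hasCompactSupport_pderivIdx j H.2).mul_left (f := fun _ => v j)
    refine ((hasCompactSupport_pderivIdx j h1.2).add hc).exists_bound_of_continuous ?_
    exact (contDiff_pderivIdx j h1.1).continuous.add
      (continuous_const.mul (contDiff_pderivIdx j H.1).continuous)
  choose D hD using h
  have hD0 : ∀ j, 0 ≤ D j := fun j => (norm_nonneg _).trans (hD j 0)
  refine ⟨∑ j, D j, Finset.sum_nonneg fun j _ => hD0 j, fun s hs j z => ?_⟩
  rw [pderivIdx_vf H, abs_mul, abs_of_nonneg (by positivity : 0 ≤ s⁻¹ ^ (n + 1))]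
  gcongr
  exact (hD j _).trans (Finset.single_le_sum (f := D) (fun i _ => hD0 i) (Finset.mem_univ j))

lemma integrable_mul_pderiv_vf {n : ℕ} {ψ : EuclideanSpace ℝ (Fin n) → ℝ}
    (H : ContDiff ℝ (⊤ : ℕ∞) ψ ∧ HasCompactSupport ψ) (x v : EuclideanSpace ℝ (Fin n))
    {F : EuclideanSpace ℝ (Fin n) → ℝ} (hF : Integrable F) {s : ℝ} (hs : 0 < s) (j : Fin n) :
    Integrable (fun z => F z * pderivIdx n j (vf n ψ x v s j) z) := by
  obtain ⟨D, hD0, hD⟩ := exists_bound_pderiv_vf H x v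
  refine hF.mul_bdd (c := (s⁻¹) ^ (n + 1) * D)
    (contDiff_pderivIdx j (contDiff_vf H x v s j)).continuous.aestronglyMeasurable ?_
  exact Filter.Eventually.of_forall fun z => hD s hs j z

lemma continuous_ker {n : ℕ} {ψ : EuclideanSpace ℝ (Fin n) → ℝ}
    (H : Continuous ψ) (x v : EuclideanSpace ℝ (Fin n)) (s : ℝ) :
    Continuous (ker n ψ x v s) := by
  unfold ker
  fun_prop

lemma integrable_mul_ker {n : ℕ} {ψ : EuclideanSpace ℝ (Fin n) → ℝ}
    (H : ContDiff ℝ (⊤ : ℕ∞) ψ ∧ HasCompactSupport ψ) (x v : EuclideanSpace ℝ (Fin n))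
    {F : EuclideanSpace ℝ (Fin n) → ℝ} (hF : Integrable F) (s : ℝ) :
    Integrable (fun z => F z * ker n ψ x v s z) := by
  obtain ⟨D, hD⟩ := H.2.exists_bound_of_continuous H.1.continuous
  refine hF.mul_bdd (c := |s⁻¹ ^ n| * D)
    (continuous_ker H.1.continuous x v s).aestronglyMeasurable ?_
  refine Filter.Eventually.of_forall fun z => ?_
  unfold ker
  rw [norm_mul]
  exact mul_le_mul_of_nonneg_left (hD _) (norm_nonneg _)

lemma hasDerivAt_integral_ker {n : ℕ} {ψ : EuclideanSpace ℝ (Fin n) → ℝ}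
    (H : ContDiff ℝ (⊤ : ℕ∞) ψ ∧ HasCompactSupport ψ) (x v : EuclideanSpace ℝ (Fin n))
    {F : EuclideanSpace ℝ (Fin n) → ℝ} (hF : Integrable F) {s : ℝ} (hs : 0 < s) :
    HasDerivAt (fun s => ∫ z, F z * ker n ψ x v s z)
      (- ∑ j, ∫ z, F z * pderivIdx n j (vf n ψ x v s j) z) s := by
  obtain ⟨D, hD0, hD⟩ := exists_bound_pderiv_vf H x v
  have hmeas : ∀ s : ℝ, Continuous fun z => - ∑ j, pderivIdx n j (vf n ψ x v s j) z := fun s =>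
    (continuous_finsetSum _ fun j _ =>
      (contDiff_pderivIdx j (contDiff_vf H x v s j)).continuous).neg
  have key := hasDerivAt_integral_of_dominated_loc_of_deriv_le (μ := volume)
    (F := fun s z => F z * ker n ψ x v s z)
    (F' := fun s z => F z * (- ∑ j, pderivIdx n j (vf n ψ x v s j) z))
    (bound := fun z => ‖F z‖ * (n * (((s / 2)⁻¹) ^ (n + 1) * D)))
    (x₀ := s) (s := Ioi (s / 2)) (Ioi_mem_nhds (by linarith))
    (Filter.Eventually.of_forall fun t => (integrable_mul_ker H x v hF t).aestronglyMeasurable)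
    (integrable_mul_ker H x v hF s)
    (hF.aestronglyMeasurable.mul (hmeas s).aestronglyMeasurable)
    (Filter.Eventually.of_forall fun z t ht => by
      have ht' : s / 2 < t := ht
      have hs2 : 0 < s / 2 := by linarith
      have ht0 : 0 < t := hs2.trans ht'
      rw [norm_mul, norm_neg]
      refine mul_le_mul_of_nonneg_left ?_ (norm_nonneg _)
      refine (norm_sum_le _ _).trans ?_
      have : ∀ j ∈ Finset.univ, ‖pderivIdx n j (vf n ψ x v t j) z‖ ≤ ((s / 2)⁻¹) ^ (n + 1) * D := by
        intro j _
        refine (hD t ht0 j z).trans ?_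
        gcongr
      simpa using Finset.sum_le_sum this)
    (hF.norm.mul_const _)
    (Filter.Eventually.of_forall fun z t ht => by
      have ht' : s / 2 < t := ht
      exact (hasDerivAt_ker H x v (by linarith : 0 < t) z).const_mul (F z))
  refine key.2.congr_deriv ?_
  simp only [mul_neg, integral_neg, Finset.mul_sum]
  rw [integral_finsetSum]
  exact fun j _ => integrable_mul_pderiv_vf H x v hF hs j

lemma abs_integral_vf_le {n N : ℕ} {ψ : EuclideanSpace ℝ (Fin n) → ℝ}
    (H : ContDiff ℝ (⊤ : ℕ∞) ψ ∧ HasCompactSupport ψ)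
    (hsupp : tsupport ψ ⊆ closedBall 0 (1 / 4))
    {C : ℝ} (hC : 0 < C)
    (hb : ∀ (j : Fin n) (α : Fin n → ℕ), (∑ i, α i) ≤ N → ∀ u,
      |multiPartial n α (coordMul n ψ j) u| + |multiPartial n α ψ u| ≤ C)
    (x v : EuclideanSpace ℝ (Fin n)) (hv : ‖v‖ ≤ 1 / 2) {s ρ : ℝ} (hs : 0 < s) (hsρ : s ≤ ρ)
    (j : Fin n) {S : Set (EuclideanSpace ℝ (Fin n))} (hS : MeasurableSet S)
    (f : EuclideanSpace ℝ (Fin n) → ℝ) (hM : grandMaxOn n N S f ρ x ≠ ⊤) :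
    |∫ z, S.indicator f z * pderivIdx n j (vf n ψ x v s j) z| ≤
      C * (grandMaxOn n N S f ρ x).toReal := by
  have h1 : ENNReal.ofReal |∫ y in S, f y * pderivIdx n j (fun z => C⁻¹ * vf n ψ x v s j z) y| ≤
      grandMaxOn n N S f ρ x := by
    unfold grandMaxOn
    exact le_iSup_of_le j (le_iSup_of_le (⟨s, hs, hsρ⟩ : {s : ℝ // 0 < s ∧ s ≤ ρ})
      (le_iSup_of_le (⟨_, memTestClass_vf H hsupp hC hb x v hv hs j⟩ :
        {φ : EuclideanSpace ℝ (Fin n) → ℝ // memTestClass n N x s φ}) le_rfl))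
  have h2 := (ENNReal.ofReal_le_iff_le_toReal hM).1 h1
  have e : ∀ y, pderivIdx n j (fun z => C⁻¹ * vf n ψ x v s j z) y =
      C⁻¹ * pderivIdx n j (vf n ψ x v s j) y := by
    intro y
    unfold pderivIdx
    rw [fderiv_const_mul ((contDiff_vf H x v s j).differentiable (by simp) y)]
    simp
  have e2 : ∫ z, S.indicator f z * pderivIdx n j (vf n ψ x v s j) z =
      C * ∫ y in S, f y * pderivIdx n j (fun z => C⁻¹ * vf n ψ x v s j z) y := by
    rw [← integral_const_mul, ← integral_indicator hS]
    congr 1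
    funext z
    by_cases hz : z ∈ S
    · simp only [indicator_of_mem hz, e]
      field_simp
    · simp [indicator_of_notMem hz]
  rw [e2, abs_mul, abs_of_pos hC]
  gcongr

lemma integral_ker {n : ℕ} (ψ : EuclideanSpace ℝ (Fin n) → ℝ)
    (x v : EuclideanSpace ℝ (Fin n)) {s : ℝ} (hs : 0 < s) :
    ∫ z, ker n ψ x v s z = ∫ z, ψ z := by
  unfold ker
  rw [integral_const_mul,
    integral_sub_right_eq_self (fun z : EuclideanSpace ℝ (Fin n) => ψ (s⁻¹ • z - v)) x,
    Measure.integral_comp_inv_smul volume (fun z : EuclideanSpace ℝ (Fin n) => ψ (z - v)) s,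
    integral_sub_right_eq_self ψ v]
  rw [finrank_euclideanSpace_fin, abs_of_pos (by positivity), smul_eq_mul, ← mul_assoc, inv_pow,
    inv_mul_cancel₀ (by positivity), one_mul]

lemma tendsto_integral_ker {n : ℕ} {ψ : EuclideanSpace ℝ (Fin n) → ℝ}
    (H : ContDiff ℝ (⊤ : ℕ∞) ψ ∧ HasCompactSupport ψ)
    (hsupp : tsupport ψ ⊆ closedBall 0 (1 / 4)) (hint : ∫ z, ψ z = 1)
    (x v : EuclideanSpace ℝ (Fin n)) (hv : ‖v‖ ≤ 1 / 2)
    {F : EuclideanSpace ℝ (Fin n) → ℝ} (hF : Integrable F)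
    (hL : Filter.Tendsto (fun s : ℝ => ⨍ y in closedBall x s, ‖F y - F x‖)
      (nhdsWithin 0 (Ioi 0)) (nhds 0)) :
    Filter.Tendsto (fun s : ℝ => ∫ z, F z * ker n ψ x v s z) (nhdsWithin 0 (Ioi 0))
      (nhds (F x)) := by
  obtain ⟨D, hD⟩ := H.2.exists_bound_of_continuous H.1.continuous
  have hD0 : 0 ≤ D := (norm_nonneg _).trans (hD 0)
  rw [tendsto_iff_norm_sub_tendsto_zero]
  have hlim := hL.const_mul (D * volume.real (ball (0 : EuclideanSpace ℝ (Fin n)) 1))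
  rw [mul_zero] at hlim
  refine squeeze_zero' (Filter.Eventually.of_forall fun s => norm_nonneg _) ?_ hlim
  filter_upwards [self_mem_nhdsWithin] with s hs
  have hs : 0 < s := hs
  have hkerint : Integrable (ker n ψ x v s) := by
    have hi : Integrable ψ := H.1.continuous.integrable_of_hasCompactSupport H.2
    have h1 : Integrable (fun z => ψ (z - v)) := hi.comp_sub_right v
    have h2 : Integrable (fun z : EuclideanSpace ℝ (Fin n) => ψ (s⁻¹ • z - v)) :=
      h1.comp_smul (inv_ne_zero hs.ne')
    exact (h2.comp_sub_right x).const_mul _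
  have e1 : (∫ z, F z * ker n ψ x v s z) - F x = ∫ z, (F z - F x) * ker n ψ x v s z := by
    simp only [sub_mul]
    rw [integral_sub (integrable_mul_ker H x v hF s) (hkerint.const_mul _), integral_const_mul,
      integral_ker ψ x v hs, hint, mul_one]
  have e2 : ∫ z, (F z - F x) * ker n ψ x v s z =
      ∫ z in closedBall x s, (F z - F x) * ker n ψ x v s z := by
    symm
    apply setIntegral_eq_integral_of_forall_compl_eq_zero
    intro z hz
    have : ψ (s⁻¹ • (z - x) - v) = 0 := by
      by_contra hne
      exact hz (closedBall_subset_closedBall (by linarith)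
        (ker_arg_far hs hv (hsupp (subset_tsupport _ hne))))
    simp [ker, this]
  have hvol : volume.real (closedBall x s) =
      s ^ n * volume.real (ball (0 : EuclideanSpace ℝ (Fin n)) 1) := by
    rw [Measure.addHaar_real_closedBall volume x hs.le, finrank_euclideanSpace_fin]
  have hb1 : 0 < volume.real (ball (0 : EuclideanSpace ℝ (Fin n)) 1) := by
    rw [measureReal_def]
    exact ENNReal.toReal_pos (measure_ball_pos _ _ one_pos).ne' measure_ball_lt_top.ne
  rw [e1, e2, setAverage_eq, hvol, smul_eq_mul]
  have hFi : IntegrableOn (fun z => ‖F z - F x‖) (closedBall x s) :=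
    (hF.integrableOn.sub (integrableOn_const measure_closedBall_lt_top.ne)).norm
  calc ‖∫ z in closedBall x s, (F z - F x) * ker n ψ x v s z‖
      ≤ ∫ z in closedBall x s, ‖F z - F x‖ * (s⁻¹ ^ n * D) := by
        refine norm_integral_le_of_norm_le (hFi.mul_const _) (Filter.Eventually.of_forall fun z => ?_)
        rw [norm_mul]
        refine mul_le_mul_of_nonneg_left ?_ (norm_nonneg _)
        unfold ker
        rw [norm_mul, Real.norm_of_nonneg (by positivity : 0 ≤ s⁻¹ ^ n)]
        exact mul_le_mul_of_nonneg_left (hD _) (by positivity)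
    _ = _ := by
        rw [integral_mul_const, inv_pow]
        field_simp

lemma abs_sub_integral_ker_le {n N : ℕ} {ψ : EuclideanSpace ℝ (Fin n) → ℝ}
    (H : ContDiff ℝ (⊤ : ℕ∞) ψ ∧ HasCompactSupport ψ)
    (hsupp : tsupport ψ ⊆ closedBall 0 (1 / 4)) (hint : ∫ z, ψ z = 1)
    {C : ℝ} (hC : 0 < C)
    (hb : ∀ (j : Fin n) (α : Fin n → ℕ), (∑ i, α i) ≤ N → ∀ u,
      |multiPartial n α (coordMul n ψ j) u| + |multiPartial n α ψ u| ≤ C)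
    (x v : EuclideanSpace ℝ (Fin n)) (hv : ‖v‖ ≤ 1 / 2) {d : ℝ} (hd : 0 < d)
    {S : Set (EuclideanSpace ℝ (Fin n))} (hS : MeasurableSet S)
    (f : EuclideanSpace ℝ (Fin n) → ℝ) (hF : Integrable (S.indicator f))
    (hM : grandMaxOn n N S f d x ≠ ⊤)
    (hL : Filter.Tendsto (fun s : ℝ => ⨍ y in closedBall x s, ‖S.indicator f y - S.indicator f x‖)
      (nhdsWithin 0 (Ioi 0)) (nhds 0)) :
    |(∫ z, S.indicator f z * ker n ψ x v d z) - S.indicator f x| ≤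
      n * C * d * (grandMaxOn n N S f d x).toReal := by
  set M := (grandMaxOn n N S f d x).toReal
  have hM0 : 0 ≤ M := ENNReal.toReal_nonneg
  have ht := tendsto_integral_ker H hsupp hint x v hv hF hL
  have ht2 := (tendsto_const_nhds (x := ∫ z, S.indicator f z * ker n ψ x v d z)).sub ht
  refine le_of_tendsto ht2.abs ?_
  filter_upwards [Ioo_mem_nhdsGT hd] with a ha
  have := Convex.norm_image_sub_le_of_norm_hasDerivWithin_le
    (f := fun s => ∫ z, S.indicator f z * ker n ψ x v s z) (s := Icc a d) (C := n * C * M)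
    (fun s hs => (hasDerivAt_integral_ker H x v hF (ha.1.trans_le hs.1)).hasDerivWithinAt)
    (fun s hs => by
      rw [norm_neg]
      refine (norm_sum_le _ _).trans ?_
      have : ∀ j ∈ (Finset.univ : Finset (Fin n)),
          ‖∫ z, S.indicator f z * pderivIdx n j (vf n ψ x v s j) z‖ ≤ C * M := fun j _ =>
        abs_integral_vf_le H hsupp hC hb x v hv (ha.1.trans_le hs.1) hs.2 j hS f hM
      simpa [mul_assoc] using Finset.sum_le_sum this)
    (convex_Icc a d) (left_mem_Icc.2 ha.2.le) (right_mem_Icc.2 ha.2.le)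
  rw [Real.norm_eq_abs, Real.norm_eq_abs] at this
  refine this.trans ?_
  have h1 : |d - a| ≤ d := by rw [abs_of_pos (by linarith [ha.2])]; linarith [ha.1]
  calc n * C * M * |d - a| ≤ n * C * M * d := by gcongr
    _ = _ := by ring

/-- **Theorem 2.6.** Pointwise Hajlasz-type estimate in terms of the local grand maximal
function of the gradient: for `f ∈ L¹(2B)`, a.e. `x, y ∈ B` satisfy
`|f x - f y| ≤ c ‖x - y‖ (𝔐_{‖x-y‖,N} f(x) + 𝔐_{‖x-y‖,N} f(y))`. -/
theorem pointwise_grand_maximal_estimate (n N : ℕ) (hn : 1 ≤ n) (hN : 1 ≤ N) :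
    ∃ c : ℝ, 0 < c ∧
      ∀ (x₀ : EuclideanSpace ℝ (Fin n)) (r₀ : ℝ), 0 < r₀ →
        ∀ f : EuclideanSpace ℝ (Fin n) → ℝ, IntegrableOn f (ball x₀ (2 * r₀)) →
          ∃ E : Set (EuclideanSpace ℝ (Fin n)), E ⊆ ball x₀ r₀ ∧ volume E = 0 ∧
            ∀ x ∈ ball x₀ r₀ \ E, ∀ y ∈ ball x₀ r₀ \ E,
              ENNReal.ofReal |f x - f y| ≤
                ENNReal.ofReal (c * ‖x - y‖) *
                  (grandMaxOn n N (ball x₀ (2 * r₀)) f ‖x - y‖ x +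
                    grandMaxOn n N (ball x₀ (2 * r₀)) f ‖x - y‖ y) := by
  set ψb : ContDiffBump (0 : EuclideanSpace ℝ (Fin n)) := ⟨1 / 8, 1 / 4, by norm_num, by norm_num⟩
  set ψ : EuclideanSpace ℝ (Fin n) → ℝ := ψb.normed volume with hψ
  have H : ContDiff ℝ (⊤ : ℕ∞) ψ ∧ HasCompactSupport ψ :=
    ⟨ψb.contDiff_normed, ψb.hasCompactSupport_normed⟩
  have hsupp : tsupport ψ ⊆ closedBall 0 (1 / 4) := (ψb.tsupport_normed_eq).subset
  have hint : ∫ z, ψ z = 1 := ψb.integral_normed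
  obtain ⟨C, hC, hb⟩ : ∃ C : ℝ, 0 < C ∧
      ∀ (j : Fin n) (α : Fin n → ℕ), (∑ i, α i) ≤ N → ∀ u,
      |multiPartial n α (coordMul n ψ j) u| + |multiPartial n α ψ u| ≤ C := by
    obtain ⟨C₀, hC₀, hb₀⟩ := exists_bound_multiPartial N H.1 H.2
    choose D hD hDb using fun j : Fin n =>
      exists_bound_multiPartial N (coordMul_good j H).1 (coordMul_good j H).2
    have hs : 0 ≤ ∑ j, D j := Finset.sum_nonneg fun j _ => hD j
    refine ⟨∑ j, D j + C₀ + 1, by linarith, fun j α hα u => ?_⟩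
    have h1 := hb₀ α hα u
    have h2 := hDb j α hα u
    have h3 := Finset.single_le_sum (f := D) (fun i _ => hD i) (Finset.mem_univ j)
    linarith
  refine ⟨n * C, by positivity, ?_⟩
  intro x₀ r₀ hr₀ f hf
  set S := ball x₀ (2 * r₀) with hS
  have hSm : MeasurableSet S := measurableSet_ball
  have hF : Integrable (S.indicator f) := (integrable_indicator_iff hSm).2 hf
  have hae := IsUnifLocDoublingMeasure.ae_tendsto_average_norm_sub volume
    hF.locallyIntegrable 1
  set G : Set (EuclideanSpace ℝ (Fin n)) := {x | Filter.Tendsto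
    (fun s : ℝ => ⨍ y in closedBall x s, ‖S.indicator f y - S.indicator f x‖)
      (nhdsWithin 0 (Ioi 0)) (nhds 0)} with hG
  have hGae : ∀ᵐ x, x ∈ G := by
    filter_upwards [hae] with x hx
    refine hx (fun _ => x) (fun s => s) Filter.tendsto_id ?_
    filter_upwards [self_mem_nhdsWithin] with s hs
    have hs : 0 < s := hs
    exact mem_closedBall_self (by linarith)
  refine ⟨ball x₀ r₀ ∩ Gᶜ, inter_subset_left, measure_mono_null inter_subset_right hGae, ?_⟩
  intro x hx y hy
  have hBS : ball x₀ r₀ ⊆ S := ball_subset_ball (by linarith)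
  have hxG : x ∈ G := by
    by_contra h
    exact hx.2 ⟨hx.1, h⟩
  have hyG : y ∈ G := by
    by_contra h
    exact hy.2 ⟨hy.1, h⟩
  have hfx : S.indicator f x = f x := indicator_of_mem (hBS hx.1) f
  have hfy : S.indicator f y = f y := indicator_of_mem (hBS hy.1) f
  rcases eq_or_ne x y with rfl | hxy
  · simp
  have hd : 0 < ‖x - y‖ := norm_pos_iff.2 (sub_ne_zero.2 hxy)
  have hcd : 0 < n * C * ‖x - y‖ := by positivity
  set d := ‖x - y‖ with hdd
  by_cases hMx : grandMaxOn n N S f d x = ⊤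
  · rw [hMx, top_add, ENNReal.mul_top (by simpa using hcd)]
    exact le_top
  by_cases hMy : grandMaxOn n N S f d y = ⊤
  · rw [hMy, add_top, ENNReal.mul_top (by simpa using hcd)]
    exact le_top
  set v : EuclideanSpace ℝ (Fin n) := (2 * d)⁻¹ • (y - x) with hv
  have hvn : ‖v‖ ≤ 1 / 2 := by
    rw [hv, norm_smul, norm_sub_rev y x, ← hdd, norm_inv, Real.norm_of_nonneg (by positivity)]
    field_simp
    rfl
  have hvn' : ‖-v‖ ≤ 1 / 2 := by rwa [norm_neg]
  have k1 := abs_sub_integral_ker_le H hsupp hint hC hb x v hvn hd hSm f hF hMx hxG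
  have k2 := abs_sub_integral_ker_le H hsupp hint hC hb y (-v) hvn' hd hSm f hF hMy hyG
  have hk : ker n ψ x v d = ker n ψ y (-v) d := by
    funext z
    unfold ker
    congr 2
    have : d⁻¹ • (y - x) = v + v := by
      rw [hv, ← add_smul]
      congr 1
      field_simp
      norm_num
    have h2 : d⁻¹ • (z - x) = d⁻¹ • (z - y) + d⁻¹ • (y - x) := by
      rw [← smul_add]; congr 1; abel
    rw [h2, this]
    abel
  rw [hk, hfx] at k1
  rw [hfy] at k2
  rw [← ENNReal.ofReal_toReal hMx, ← ENNReal.ofReal_toReal hMy,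
    ← ENNReal.ofReal_add ENNReal.toReal_nonneg ENNReal.toReal_nonneg,
    ← ENNReal.ofReal_mul hcd.le]
  apply ENNReal.ofReal_le_ofReal
  rw [abs_sub_comm] at k1
  have := abs_sub_le (f x) (∫ z, S.indicator f z * ker n ψ y (-v) d z) (f y)
  linarith
end
end

section
/- Let n ≥ 1 and fix ψ as in the context. There is a constant C = C(n,ψ) such that for every locally integrable f : ℝⁿ → ℝ, every Hajlasz gradient g of f on ℝⁿ, every x ∈ ℝⁿ, and every j ∈ {1,…,n}, one has sup_{t>0} t^{−n−1} |∫_{ℝⁿ} f(y) (∂_j ψ)((x−y)/t) dy| ≤ C · ( M( g^{n/(n+1)} )(x) )^{(n+1)/n}, where both sides are interpreted as values in [0,∞]. -/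
open MeasureTheory Metric Set ENNReal NNReal

noncomputable section

/-- `g` is a Hajlasz gradient of `u` on `U ⊆ ℝⁿ`: `g` is measurable, nonnegative, and
off a set of measure zero `|u x - u y| ≤ ‖x - y‖ (g x + g y)` for `x, y ∈ U`. -/
def IsHajlaszGradientOn (n : ℕ) (u g : EuclideanSpace ℝ (Fin n) → ℝ)
    (U : Set (EuclideanSpace ℝ (Fin n))) : Prop :=
  Measurable g ∧ (∀ x, 0 ≤ g x) ∧
    ∃ E : Set (EuclideanSpace ℝ (Fin n)), MeasureTheory.volume E = 0 ∧
      ∀ x ∈ U \ E, ∀ y ∈ U \ E, |u x - u y| ≤ ‖x - y‖ * (g x + g y)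

/-- The smooth maximal function of the distributional derivative `D_j f`:
`M_ψ(D_j f)(x) = sup_{t>0} t^{-n-1} |∫ f(y) (∂_j ψ)((x-y)/t) dy|`. -/
def smoothMax (n : ℕ) (ψ f : EuclideanSpace ℝ (Fin n) → ℝ) (j : Fin n)
    (x : EuclideanSpace ℝ (Fin n)) : ℝ≥0∞ :=
  ⨆ (t : {s : ℝ // 0 < s}),
    ENNReal.ofReal ((t.1⁻¹) ^ (n + 1) *
      |∫ y, f y * fderiv ℝ ψ (t.1⁻¹ • (x - y)) (EuclideanSpace.single j 1)|)

/-- The Hardy–Littlewood maximal function, with values in `[0,∞]`. -/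
def hlMax (n : ℕ) (h : EuclideanSpace ℝ (Fin n) → ℝ)
    (x : EuclideanSpace ℝ (Fin n)) : ℝ≥0∞ :=
  ⨆ (r : {s : ℝ // 0 < s}),
    (volume (ball x r.1))⁻¹ * ∫⁻ y in ball x r.1, ENNReal.ofReal |h y|

lemma vol_ball_aux (n : ℕ) (x : EuclideanSpace ℝ (Fin n)) {r : ℝ} (hr : 0 < r) :
    volume (ball x r) =
      ENNReal.ofReal (r ^ n) * volume (ball (0 : EuclideanSpace ℝ (Fin n)) 1) := by
  have h := Measure.addHaar_ball_of_pos (volume : Measure (EuclideanSpace ℝ (Fin n))) x hr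
  rwa [finrank_euclideanSpace_fin] at h

lemma vol_unit_ne_zero (n : ℕ) : volume (ball (0 : EuclideanSpace ℝ (Fin n)) 1) ≠ 0 :=
  (measure_ball_pos volume _ one_pos).ne'

lemma vol_unit_ne_top (n : ℕ) : volume (ball (0 : EuclideanSpace ℝ (Fin n)) 1) ≠ ⊤ :=
  measure_ball_lt_top.ne

/-- Every small ball contains a good point where `h` is small. -/
lemma exists_good_point (n : ℕ) (hn : 1 ≤ n) (h : EuclideanSpace ℝ (Fin n) → ℝ)
    (hm : Measurable h) (E : Set (EuclideanSpace ℝ (Fin n))) (hE : volume E = 0)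
    (x : EuclideanSpace ℝ (Fin n)) (t a : ℝ) (ht : 0 < t) (ha : 0 < a)
    (hA : ∫⁻ y in ball x (2 * t), ENNReal.ofReal (h y) ≤
      ENNReal.ofReal a * volume (ball x (2 * t)))
    (i : ℕ) (y : EuclideanSpace ℝ (Fin n))
    (hy : ball y (t / 2 ^ (i + 1)) ⊆ ball x (2 * t)) :
    ∃ z ∈ ball y (t / 2 ^ (i + 1)), z ∉ E ∧ h z ≤ a * 8 ^ n * 2 ^ (n * i) := by
  by_contra! hcon
  set r : ℝ := t / 2 ^ (i + 1) with hr
  have hrpos : 0 < r := by positivity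
  set l : ℝ := a * 8 ^ n * 2 ^ (n * i) with hl
  have hlpos : 0 < l := by positivity
  have h1 : volume (ball y r) ≤
      (volume.restrict (ball x (2 * t))) {z | ENNReal.ofReal l ≤ ENNReal.ofReal (h z)} := by
    rw [Measure.restrict_apply
      (measurableSet_le measurable_const hm.ennreal_ofReal)]
    calc volume (ball y r) ≤ volume
          (E ∪ ({z | ENNReal.ofReal l ≤ ENNReal.ofReal (h z)} ∩ ball x (2 * t))) := by
          apply measure_mono
          intro z hz
          by_cases hzE : z ∈ E
          · exact Or.inl hzE
          · exact Or.inr ⟨ENNReal.ofReal_le_ofReal (hcon z hz hzE).le, hy hz⟩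
      _ ≤ _ := by
          refine (measure_union_le _ _).trans ?_
          rw [hE, zero_add]
  have h2 : ENNReal.ofReal l * volume (ball y r) ≤
      ENNReal.ofReal a * volume (ball x (2 * t)) :=
    (mul_le_mul_right h1 _).trans ((mul_meas_ge_le_lintegral
      hm.ennreal_ofReal _).trans hA)
  rw [vol_ball_aux n y hrpos, vol_ball_aux n x (by positivity : 0 < 2 * t), ← mul_assoc,
    ← mul_assoc, ENNReal.mul_le_mul_iff_left (vol_unit_ne_zero n) (vol_unit_ne_top n),
    ← ENNReal.ofReal_mul hlpos.le, ← ENNReal.ofReal_mul ha.le,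
    ENNReal.ofReal_le_ofReal_iff (by positivity)] at h2
  have h3 : l * r ^ n = a * (4 * t) ^ n := by
    rw [hl, hr, pow_mul', mul_assoc, mul_assoc, ← mul_pow, ← mul_pow]
    congr 2
    field_simp
    ring
  rw [h3] at h2
  have h4 : (2 * t) ^ n < (4 * t) ^ n := by
    apply pow_lt_pow_left₀ (by linarith) (by positivity) (by omega)
  nlinarith

/-- The chaining argument. -/
lemma chain_aux (n : ℕ) (hn : 1 ≤ n) (f g h : EuclideanSpace ℝ (Fin n) → ℝ)
    (hm : Measurable h) (E : Set (EuclideanSpace ℝ (Fin n))) (hE : volume E = 0)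
    (hfg : ∀ y ∉ E, ∀ z ∉ E, |f y - f z| ≤ ‖y - z‖ * (g y + g z))
    (x : EuclideanSpace ℝ (Fin n)) (t a Λ : ℝ) (ht : 0 < t) (ha : 0 < a) (hΛ : 0 < Λ)
    (hgh : ∀ (y : EuclideanSpace ℝ (Fin n)) (i : ℕ),
      h y ≤ a * 8 ^ n * 2 ^ (n * i) → g y ≤ Λ * 2 ^ ((n + 1) * i))
    (hg0 : ∀ y, 0 ≤ g y)
    (hA : ∫⁻ y in ball x (2 * t), ENNReal.ofReal (h y) ≤
      ENNReal.ofReal a * volume (ball x (2 * t))) (i : ℕ) :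
    ∀ y ∉ E, dist y x + t * (1 - 1 / 2 ^ i) < 2 * t → h y ≤ a * 8 ^ n * 2 ^ (n * i) →
      ∃ z ∈ ball x (2 * t), z ∉ E ∧ h z ≤ a * 8 ^ n ∧
        |f y - f z| ≤ 4 * Λ * t * 2 ^ (n * i) := by
  induction i with
  | zero =>
    intro y hyE hy hh
    refine ⟨y, ?_, hyE, by simpa using hh, ?_⟩
    · rw [mem_ball]; simpa using hy
    · simp; positivity
  | succ i ih =>
    intro y hyE hy hh
    have key : ∀ z ∈ ball y (t / 2 ^ (i + 1)), dist z x + t * (1 - 1 / 2 ^ i) < 2 * t := by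
      intro z hz
      rw [mem_ball] at hz
      have h1 := dist_triangle z y x
      have h2 : t * (1 - 1 / 2 ^ i) = t * (1 - 1 / 2 ^ (i + 1)) - t / 2 ^ (i + 1) := by
        rw [pow_succ]; field_simp; ring
      linarith
    have hle : 0 ≤ t * (1 - 1 / 2 ^ i : ℝ) := by
      apply mul_nonneg ht.le
      rw [sub_nonneg, div_le_one (by positivity)]
      exact one_le_pow₀ (by norm_num)
    obtain ⟨z, hz, hzE, hhz⟩ := exists_good_point n hn h hm E hE x t a ht ha hA i y (by
      intro z hz
      rw [mem_ball]
      linarith [key z hz])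
    obtain ⟨w, hw, hwE, hhw, hfw⟩ := ih z hzE (key z hz) hhz
    refine ⟨w, hw, hwE, hhw, ?_⟩
    have h1 := hfg y hyE z hzE
    have hgy := hgh y (i + 1) hh
    have hgz := hgh z i hhz
    have hd : ‖y - z‖ ≤ t / 2 ^ (i + 1) := by
      rw [mem_ball, dist_comm, dist_eq_norm] at hz
      exact hz.le
    have hgz2 : g z ≤ Λ * 2 ^ ((n + 1) * (i + 1)) := by
      refine hgz.trans ?_
      gcongr
      · norm_num
      · omega
    have h2 : |f y - f z| ≤ 2 * Λ * t * 2 ^ (n * (i + 1)) := by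
      calc |f y - f z| ≤ ‖y - z‖ * (g y + g z) := h1
        _ ≤ t / 2 ^ (i + 1) *
            (Λ * 2 ^ ((n + 1) * (i + 1)) + Λ * 2 ^ ((n + 1) * (i + 1))) := by
            apply mul_le_mul hd (by linarith) (by linarith [hg0 y, hg0 z]) (by positivity)
        _ = _ := by
            rw [add_mul n 1, pow_add, one_mul]
            field_simp
            ring
    have h3 : (2 : ℝ) * 2 ^ (n * i) ≤ 2 ^ (n * (i + 1)) := by
      rw [← pow_succ']
      apply pow_le_pow_right₀ (by norm_num)
      rw [mul_add]; omega
    have h4 : |f y - f w| ≤ |f y - f z| + |f z - f w| := abs_sub_le _ _ _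
    have h5 : 0 < Λ * t := by positivity
    nlinarith

/-- The pointwise bound. -/
lemma pointwise_aux (n : ℕ) (hn : 1 ≤ n) (f g h : EuclideanSpace ℝ (Fin n) → ℝ)
    (hm : Measurable h) (E : Set (EuclideanSpace ℝ (Fin n))) (hE : volume E = 0)
    (hfg : ∀ y ∉ E, ∀ z ∉ E, |f y - f z| ≤ ‖y - z‖ * (g y + g z))
    (x : EuclideanSpace ℝ (Fin n)) (t a Λ : ℝ) (ht : 0 < t) (ha : 0 < a) (hΛ : 0 < Λ)
    (hgh : ∀ (y : EuclideanSpace ℝ (Fin n)) (i : ℕ),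
      h y ≤ a * 8 ^ n * 2 ^ (n * i) → g y ≤ Λ * 2 ^ ((n + 1) * i))
    (hg0 : ∀ y, 0 ≤ g y) (hh0 : ∀ y, 0 ≤ h y)
    (hA : ∫⁻ y in ball x (2 * t), ENNReal.ofReal (h y) ≤
      ENNReal.ofReal a * volume (ball x (2 * t))) :
    ∃ c : ℝ, ∀ y ∈ ball x t, y ∉ E →
      |f y - c| ≤ 12 * Λ * t + 4 * 2 ^ n * Λ * t / (a * 8 ^ n) * h y := by
  obtain ⟨z0, hz0, hz0E, hhz0⟩ := exists_good_point n hn h hm E hE x t a ht ha hA 0 x (by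
    apply ball_subset_ball
    norm_num
    linarith)
  have hz0' : dist z0 x < 2 * t := by
    rw [mem_ball] at hz0; norm_num at hz0; linarith
  refine ⟨f z0, fun y hy hyE => ?_⟩
  set L : ℝ := a * 8 ^ n with hL
  have hLpos : 0 < L := by positivity
  have hex : ∃ i : ℕ, h y ≤ L * 2 ^ (n * i) := by
    obtain ⟨i, hi⟩ := pow_unbounded_of_one_lt (h y / L) (by norm_num : (1 : ℝ) < 2)
    refine ⟨i, ?_⟩
    rw [div_lt_iff₀ hLpos] at hi
    have : (2 : ℝ) ^ i ≤ 2 ^ (n * i) :=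
      pow_le_pow_right₀ (by norm_num) (Nat.le_mul_of_pos_left _ hn)
    nlinarith
  classical
  have hi := Nat.find_spec hex
  set i := Nat.find hex with hidef
  have hpow : (2 : ℝ) ^ (n * i) ≤ 1 + 2 ^ n * h y / L := by
    rcases Nat.eq_zero_or_pos i with h0 | h0
    · rw [h0]
      have := hh0 y
      simp only [mul_zero, pow_zero, le_add_iff_nonneg_right]
      positivity
    · have h1 := Nat.find_min hex (m := i - 1) (by omega)
      push Not at h1
      have h2 : (2 : ℝ) ^ (n * i) = 2 ^ n * 2 ^ (n * (i - 1)) := by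
        rw [← pow_add]
        congr 1
        obtain ⟨k, hk⟩ := Nat.exists_eq_add_of_lt h0
        rw [hk]
        simp
        ring
      have h3 : (2 : ℝ) ^ (n * (i - 1)) ≤ h y / L := by
        rw [le_div_iff₀ hLpos]; linarith
      rw [h2, mul_div_assoc]
      have : (0 : ℝ) < 2 ^ n := by positivity
      nlinarith
  rw [mem_ball] at hy
  obtain ⟨z, hz, hzE, hhz, hfz⟩ := chain_aux n hn f g h hm E hE hfg x t a Λ ht ha hΛ hgh hg0 hA
    i y hyE (by
      have : t * (1 - 1 / 2 ^ i) ≤ t * 1 := by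
        apply mul_le_mul_of_nonneg_left _ ht.le
        have : (0 : ℝ) ≤ 1 / 2 ^ i := by positivity
        linarith
      linarith) hi
  have g1 : g z ≤ Λ := by simpa using hgh z 0 (by simpa using hhz)
  have g2 : g z0 ≤ Λ := by simpa using hgh z0 0 (by simpa using hhz0)
  have hd : ‖z - z0‖ ≤ 4 * t := by
    rw [← dist_eq_norm]
    rw [mem_ball] at hz
    have := dist_triangle_right z z0 x
    linarith
  have h1 : |f z - f z0| ≤ 4 * t * (Λ + Λ) :=
    (hfg z hzE z0 hz0E).trans
      (mul_le_mul hd (by linarith) (by linarith [hg0 z, hg0 z0]) (by positivity))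
  have h4 : |f y - f z0| ≤ |f y - f z| + |f z - f z0| := abs_sub_le _ _ _
  have h5 : 4 * Λ * t * 2 ^ (n * i) ≤ 4 * Λ * t * (1 + 2 ^ n * h y / L) :=
    mul_le_mul_of_nonneg_left hpow (by positivity)
  have h6 : 4 * Λ * t * (1 + 2 ^ n * h y / L) = 4 * Λ * t + 4 * 2 ^ n * Λ * t / L * h y := by
    field_simp
  linarith

/-- The endpoint Sobolev–Poincaré inequality. -/
lemma poincare_aux (n : ℕ) (hn : 1 ≤ n) (f g h : EuclideanSpace ℝ (Fin n) → ℝ)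
    (hm : Measurable h) (E : Set (EuclideanSpace ℝ (Fin n))) (hE : volume E = 0)
    (hfg : ∀ y ∉ E, ∀ z ∉ E, |f y - f z| ≤ ‖y - z‖ * (g y + g z))
    (x : EuclideanSpace ℝ (Fin n)) (t a Λ : ℝ) (ht : 0 < t) (ha : 0 < a) (hΛ : 0 < Λ)
    (hgh : ∀ (y : EuclideanSpace ℝ (Fin n)) (i : ℕ),
      h y ≤ a * 8 ^ n * 2 ^ (n * i) → g y ≤ Λ * 2 ^ ((n + 1) * i))
    (hg0 : ∀ y, 0 ≤ g y) (hh0 : ∀ y, 0 ≤ h y)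
    (hA : ∫⁻ y in ball x (2 * t), ENNReal.ofReal (h y) ≤
      ENNReal.ofReal a * volume (ball x (2 * t))) :
    ∃ c : ℝ, ∫⁻ y in ball x t, ENNReal.ofReal |f y - c| ≤
      ENNReal.ofReal (16 * Λ * t ^ (n + 1)) *
        volume (ball (0 : EuclideanSpace ℝ (Fin n)) 1) := by
  obtain ⟨c, hc⟩ := pointwise_aux n hn f g h hm E hE hfg x t a Λ ht ha hΛ hgh hg0 hh0 hA
  refine ⟨c, ?_⟩
  set q : ℝ := 4 * 2 ^ n * Λ * t / (a * 8 ^ n) with hq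
  have hq0 : 0 ≤ q := by positivity
  have hae : ∀ᵐ y ∂(volume : Measure (EuclideanSpace ℝ (Fin n))), y ∉ E :=
    measure_eq_zero_iff_ae_notMem.1 hE
  have hball : ∀ᵐ y ∂(volume.restrict (ball x t)), ENNReal.ofReal |f y - c| ≤
      ENNReal.ofReal (12 * Λ * t) + ENNReal.ofReal q * ENNReal.ofReal (h y) := by
    rw [ae_restrict_iff' measurableSet_ball]
    filter_upwards [hae] with y hy hyb
    rw [← ENNReal.ofReal_mul hq0, ← ENNReal.ofReal_add (by positivity)
      (mul_nonneg hq0 (hh0 y))]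
    exact ENNReal.ofReal_le_ofReal (hc y hyb hy)
  calc ∫⁻ y in ball x t, ENNReal.ofReal |f y - c|
      ≤ ∫⁻ y in ball x t,
          (ENNReal.ofReal (12 * Λ * t) + ENNReal.ofReal q * ENNReal.ofReal (h y)) :=
        lintegral_mono_ae hball
    _ = ENNReal.ofReal (12 * Λ * t) * volume (ball x t) +
          ENNReal.ofReal q * ∫⁻ y in ball x t, ENNReal.ofReal (h y) := by
        rw [lintegral_add_left measurable_const, lintegral_const,
          lintegral_const_mul _ hm.ennreal_ofReal]
        simp
    _ ≤ ENNReal.ofReal (12 * Λ * t) * volume (ball x t) +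
          ENNReal.ofReal q * (ENNReal.ofReal a * volume (ball x (2 * t))) := by
        gcongr
        refine le_trans ?_ hA
        exact lintegral_mono_set (ball_subset_ball (by linarith))
    _ ≤ _ := by
        rw [vol_ball_aux n x ht, vol_ball_aux n x (by positivity : 0 < 2 * t),
          ← mul_assoc, ← mul_assoc, ← mul_assoc, ← add_mul,
          ← ENNReal.ofReal_mul (by positivity), ← ENNReal.ofReal_mul hq0,
          ← ENNReal.ofReal_mul (by positivity), ← ENNReal.ofReal_add (by positivity)
          (by positivity)]
        gcongr
        have h8 : (8 : ℝ) ^ n = 2 ^ n * 2 ^ n * 2 ^ n := by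
          rw [← mul_pow, ← mul_pow]; norm_num
        have h1 : q * a * (2 * t) ^ n = 4 * Λ * t ^ (n + 1) / 2 ^ n := by
          rw [hq, h8, mul_pow]
          field_simp
          ring
        have h2 : 4 * Λ * t ^ (n + 1) / 2 ^ n ≤ 4 * Λ * t ^ (n + 1) :=
          div_le_self (by positivity) (one_le_pow₀ (by norm_num))
        rw [h1]
        have h3 : 12 * Λ * t * t ^ n = 12 * Λ * t ^ (n + 1) := by ring
        linarith

/-- The derivative of a compactly supported function has vanishing integral. -/
lemma integral_deriv_zero (n : ℕ) (ψ : EuclideanSpace ℝ (Fin n) → ℝ)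
    (hψ : ContDiff ℝ (⊤ : ℕ∞) ψ) (hc : HasCompactSupport ψ) (v : EuclideanSpace ℝ (Fin n)) :
    ∫ y, fderiv ℝ ψ y v = 0 := by
  have hcont : Continuous (fun y => fderiv ℝ ψ y v) :=
    (hψ.continuous_fderiv (by simp)).clm_apply continuous_const
  have h := integral_mul_fderiv_eq_neg_fderiv_mul_of_integrable
    (μ := (volume : Measure (EuclideanSpace ℝ (Fin n))))
    (f := fun _ => (1 : ℝ)) (g := ψ) (v := v) (by simp)
    (by simpa using hcont.integrable_of_hasCompactSupport (hc.fderiv_apply (𝕜 := ℝ) v))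
    (by simpa using hψ.continuous.integrable_of_hasCompactSupport hc)
    (fun _ _ => by fun_prop) (fun y _ => (hψ.differentiable (by simp)) y)
  simpa using h

lemma integral_kernel_zero (n : ℕ) (ψ : EuclideanSpace ℝ (Fin n) → ℝ)
    (hψ : ContDiff ℝ (⊤ : ℕ∞) ψ) (hc : HasCompactSupport ψ) (v : EuclideanSpace ℝ (Fin n))
    (x : EuclideanSpace ℝ (Fin n)) (t : ℝ) :
    ∫ y, fderiv ℝ ψ (t⁻¹ • (x - y)) v = 0 := by
  rw [integral_sub_left_eq_self (fun z => fderiv ℝ ψ (t⁻¹ • z) v) volume x,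
    Measure.integral_comp_smul volume (fun z => fderiv ℝ ψ z v) t⁻¹,
    integral_deriv_zero n ψ hψ hc v, smul_zero]

lemma kernel_bound (n : ℕ) (ψ : EuclideanSpace ℝ (Fin n) → ℝ)
    (hψ : ContDiff ℝ (⊤ : ℕ∞) ψ) (hψsupp : tsupport ψ ⊆ ball 0 1)
    (v : EuclideanSpace ℝ (Fin n)) (K : ℝ) (hK : ∀ y, |fderiv ℝ ψ y v| ≤ K)
    (f : EuclideanSpace ℝ (Fin n) → ℝ) (hf : LocallyIntegrable f)
    (x : EuclideanSpace ℝ (Fin n)) (t c : ℝ) (ht : 0 < t) :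
    ENNReal.ofReal |∫ y, f y * fderiv ℝ ψ (t⁻¹ • (x - y)) v| ≤
      ENNReal.ofReal K * ∫⁻ y in ball x t, ENNReal.ofReal |f y - c| := by
  have hc : HasCompactSupport ψ :=
    HasCompactSupport.of_support_subset_isCompact (isCompact_closedBall 0 1)
      ((subset_tsupport ψ).trans (hψsupp.trans ball_subset_closedBall))
  set Φ : EuclideanSpace ℝ (Fin n) → ℝ := fun y => fderiv ℝ ψ (t⁻¹ • (x - y)) v with hΦ
  have hcont : Continuous Φ :=
    ((hψ.continuous_fderiv (by simp)).comp (by fun_prop)).clm_apply continuous_const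
  have hzero : ∀ y ∉ ball x t, Φ y = 0 := by
    intro y hy
    have h1 : t⁻¹ • (x - y) ∉ tsupport ψ := by
      intro h
      have h2 := hψsupp h
      rw [mem_ball_zero_iff, norm_smul, norm_inv, Real.norm_of_nonneg ht.le,
        inv_mul_lt_iff₀ ht, mul_one, ← dist_eq_norm, dist_comm] at h2
      exact hy h2
    have h3 : fderiv ℝ ψ (t⁻¹ • (x - y)) = 0 := by
      by_contra h
      exact h1 (support_fderiv_subset ℝ h)
    simp [hΦ, h3]
  have hΦc : HasCompactSupport Φ :=
    HasCompactSupport.intro (isCompact_closedBall x t)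
      (fun y hy => hzero y (fun h => hy (ball_subset_closedBall h)))
  have hint1 : Integrable (fun y => f y * Φ y) := by
    have := hf.integrable_smul_left_of_hasCompactSupport hcont hΦc
    simpa [mul_comm] using this
  have hint2 : Integrable (fun y => c * Φ y) :=
    (hcont.integrable_of_hasCompactSupport hΦc).const_mul c
  have heq : ∫ y, f y * Φ y = ∫ y, (f y - c) * Φ y := by
    simp_rw [sub_mul]
    rw [integral_sub hint1 hint2, integral_const_mul,
      integral_kernel_zero n ψ hψ hc v x t]
    simp
  rw [heq, ← Real.norm_eq_abs, ofReal_norm]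
  refine (enorm_integral_le_lintegral_enorm _).trans ?_
  rw [← lintegral_const_mul' _ _ ENNReal.ofReal_ne_top, ← lintegral_indicator measurableSet_ball]
  apply lintegral_mono
  intro y
  by_cases hy : y ∈ ball x t
  · simp only [indicator_of_mem hy]
    rw [enorm_mul, mul_comm, ← ofReal_norm, ← ofReal_norm,
      Real.norm_eq_abs, Real.norm_eq_abs]
    gcongr
    exact hK _
  · simp [hzero y hy]

/-- **Key pointwise estimate in the proof of Theorem 1.1.** The smooth maximal function
of `D_j f` is dominated by an iterated Hardy–Littlewood maximal function of any Hajlasz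
gradient: `M_ψ(D_j f)(x) ≤ C (M(g^{n/(n+1)})(x))^{(n+1)/n}`. -/
theorem smooth_maximal_le_iterated_maximal_of_hajlasz
    (n : ℕ) (hn : 1 ≤ n)
    (ψ : EuclideanSpace ℝ (Fin n) → ℝ) (hψ : ContDiff ℝ (⊤ : ℕ∞) ψ)
    (hψsupp : tsupport ψ ⊆ ball 0 1) (hψint : ∫ x, ψ x = 1) :
    ∃ C : ℝ≥0∞, C ≠ ⊤ ∧
      ∀ f : EuclideanSpace ℝ (Fin n) → ℝ, LocallyIntegrable f →
        ∀ g : EuclideanSpace ℝ (Fin n) → ℝ, IsHajlaszGradientOn n f g univ →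
          ∀ (x : EuclideanSpace ℝ (Fin n)) (j : Fin n),
            smoothMax n ψ f j x ≤
              C * (hlMax n (fun y => g y ^ ((n : ℝ) / (n + 1))) x) ^ ((n + 1 : ℝ) / n) := by
  have hc : HasCompactSupport ψ :=
    HasCompactSupport.of_support_subset_isCompact (isCompact_closedBall 0 1)
      ((subset_tsupport ψ).trans (hψsupp.trans ball_subset_closedBall))
  obtain ⟨K0, hK0⟩ := (hc.fderiv (𝕜 := ℝ)).exists_bound_of_continuous
    (hψ.continuous_fderiv (by simp))
  set K : ℝ := max K0 1 with hKdef
  have hKpos : 0 < K := lt_of_lt_of_le one_pos (le_max_right _ _)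
  have hK : ∀ (j : Fin n) y, |fderiv ℝ ψ y (EuclideanSpace.single j 1)| ≤ K := by
    intro j y
    have h1 := (fderiv ℝ ψ y).le_opNorm (EuclideanSpace.single j (1 : ℝ))
    rw [EuclideanSpace.norm_single, norm_one, mul_one, Real.norm_eq_abs] at h1
    exact h1.trans ((hK0 y).trans (le_max_left _ _))
  set V := volume (ball (0 : EuclideanSpace ℝ (Fin n)) 1) with hV
  have hnpos : (0 : ℝ) < n := by exact_mod_cast hn
  set e : ℝ := (n + 1 : ℝ) / n with he
  have hepos : 0 < e := by positivity
  set p : ℝ := (n : ℝ) / (n + 1) with hp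
  have hpe : p * e = 1 := by rw [hp, he]; field_simp
  have hne : (n : ℝ) * e = (n + 1 : ℕ) := by rw [he]; push_cast; field_simp
  set C : ℝ≥0∞ := ENNReal.ofReal (K * (16 * 8 ^ (n + 1))) * V with hC
  have hCtop : C ≠ ⊤ := ENNReal.mul_ne_top ENNReal.ofReal_ne_top (vol_unit_ne_top n)
  have hC0 : C ≠ 0 := by
    refine mul_ne_zero ?_ (vol_unit_ne_zero n)
    rw [Ne, ENNReal.ofReal_eq_zero, not_le]
    positivity
  refine ⟨C, hCtop, ?_⟩
  rintro f hf g ⟨hgm, hg0, E, hE, hfg⟩ x j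
  set h : EuclideanSpace ℝ (Fin n) → ℝ := fun y => g y ^ p with hh
  have hhm : Measurable h := hgm.pow_const p
  have hh0 : ∀ y, 0 ≤ h y := fun y => Real.rpow_nonneg (hg0 y) _
  have hghe : ∀ y, g y = h y ^ e := by
    intro y
    rw [hh, ← Real.rpow_mul (hg0 y), hpe, Real.rpow_one]
  have hfg' : ∀ y ∉ E, ∀ z ∉ E, |f y - f z| ≤ ‖y - z‖ * (g y + g z) :=
    fun y hy z hz => hfg y ⟨mem_univ _, hy⟩ z ⟨mem_univ _, hz⟩
  have main : ∀ a : ℝ, 0 < a → hlMax n h x ≤ ENNReal.ofReal a →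
      smoothMax n ψ f j x ≤ C * ENNReal.ofReal a ^ e := by
    intro a ha hM
    refine iSup_le ?_
    rintro ⟨t, ht⟩
    dsimp only
    set Λ : ℝ := a ^ e * 8 ^ (n + 1) with hΛdef
    have hΛ : 0 < Λ := by positivity
    have hpw : ∀ b : ℝ, 0 ≤ b → (b ^ n) ^ e = b ^ (n + 1) := by
      intro b hb
      rw [← Real.rpow_natCast b n, ← Real.rpow_mul hb, hne, Real.rpow_natCast]
    have hgh : ∀ (y : EuclideanSpace ℝ (Fin n)) (i : ℕ),
        h y ≤ a * 8 ^ n * 2 ^ (n * i) → g y ≤ Λ * 2 ^ ((n + 1) * i) := by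
      intro y i hy
      rw [hghe y]
      refine (Real.rpow_le_rpow (hh0 y) hy hepos.le).trans (le_of_eq ?_)
      rw [Real.mul_rpow (by positivity) (by positivity), Real.mul_rpow ha.le (by positivity),
        hpw 8 (by norm_num), pow_mul' 2 n i, hpw _ (by positivity), ← pow_mul' 2 (n + 1) i]
    have hA : ∫⁻ y in ball x (2 * t), ENNReal.ofReal (h y) ≤
        ENNReal.ofReal a * volume (ball x (2 * t)) := by
      have h1 := (le_iSup (fun r : {s : ℝ // 0 < s} =>
        (volume (ball x r.1))⁻¹ * ∫⁻ y in ball x r.1, ENNReal.ofReal |h y|)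
        ⟨2 * t, by positivity⟩).trans hM
      dsimp only at h1
      rw [← ENNReal.div_eq_inv_mul, ENNReal.div_le_iff
        (measure_ball_pos volume _ (by positivity)).ne' measure_ball_lt_top.ne] at h1
      simpa only [abs_of_nonneg (hh0 _)] using h1
    obtain ⟨c, hcb⟩ := poincare_aux n hn f g h hhm E hE hfg' x t a Λ ht ha hΛ hgh hg0 hh0 hA
    have hk := kernel_bound n ψ hψ hψsupp (EuclideanSpace.single j 1) K (hK j) f hf x t c ht
    rw [ENNReal.ofReal_mul (by positivity)]
    calc _ ≤ ENNReal.ofReal (t⁻¹ ^ (n + 1)) * (ENNReal.ofReal K *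
          (ENNReal.ofReal (16 * Λ * t ^ (n + 1)) * V)) := by
          gcongr
          exact hk.trans (by gcongr)
      _ = C * ENNReal.ofReal a ^ e := by
          rw [ENNReal.ofReal_rpow_of_pos ha, hC, mul_right_comm (ENNReal.ofReal (K * _)) V, ← mul_assoc, ← mul_assoc,
            ← ENNReal.ofReal_mul (by positivity), ← ENNReal.ofReal_mul (by positivity),
            ← ENNReal.ofReal_mul (by positivity)]
          congr 2
          rw [hΛdef, inv_pow]
          field_simp
  by_cases hMtop : hlMax n h x = ⊤
  · rw [hMtop, ENNReal.top_rpow_of_pos hepos, ENNReal.mul_top hC0]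
    exact le_top
  · set M := (hlMax n h x).toReal with hMdef
    have hMeq : hlMax n h x = ENNReal.ofReal M := (ENNReal.ofReal_toReal hMtop).symm
    have hM0 : 0 ≤ M := ENNReal.toReal_nonneg
    have htend : Filter.Tendsto (fun a : ℝ => C * ENNReal.ofReal a ^ e)
        (nhdsWithin M (Ioi M)) (nhds (C * ENNReal.ofReal M ^ e)) := by
      refine ENNReal.Tendsto.const_mul ?_ (Or.inr hCtop)
      exact ((ENNReal.continuous_rpow_const.comp ENNReal.continuous_ofReal).tendsto M).mono_left
        nhdsWithin_le_nhds
    rw [hMeq]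
    refine ge_of_tendsto htend ?_
    filter_upwards [self_mem_nhdsWithin] with a ha
    have ha' : M < a := ha
    exact main a (by linarith) (by rw [hMeq]; exact ENNReal.ofReal_le_ofReal ha'.le)
end
end

section
/- Let n ≥ 1, p > n/(n+1) and K < ∞. Suppose (f_k)_{k∈ℕ} is a sequence of locally integrable functions in L^p(ℝⁿ) and for each k there is a Hajlasz gradient g_k of f_k on ℝⁿ with ‖f_k‖_{L^p(ℝⁿ)} + ‖g_k‖_{L^p(ℝⁿ)} ≤ K. Then there exist a function f ∈ L^p(ℝⁿ) admitting a Hajlasz gradient on ℝⁿ lying in L^p(ℝⁿ), and a subsequence (f_{k_ℓ}) such that ∫_B |f_{k_ℓ} − f| dm → 0 as ℓ → ∞ for every ball B ⊆ ℝⁿ. -/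
open MeasureTheory Metric Set ENNReal NNReal

noncomputable section

/-- The `L^p` quasinorm (for a positive real exponent `p`) of a real function
with respect to the measure `μ`. -/
def lpNorm (n : ℕ) (p : ℝ) (g : EuclideanSpace ℝ (Fin n) → ℝ)
    (μ : Measure (EuclideanSpace ℝ (Fin n))) : ℝ≥0∞ :=
  (∫⁻ x, ENNReal.ofReal |g x| ^ p ∂μ) ^ (1 / p)

lemma nested_convex {H : Type*} [NormedAddCommGroup H] [InnerProductSpace ℝ H] [CompleteSpace H]
    (T : ℕ → Set H) (hanti : Antitone T) (hconv : ∀ m, Convex ℝ (T m))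
    (hcl : ∀ m, IsClosed (T m)) (B : ℝ) (hB : ∀ m, ∃ x ∈ T m, ‖x‖ ≤ B) :
    ∃ L, ∀ m, L ∈ T m := by
  have h1 : ∀ m, ∃ v ∈ T m, ∀ w ∈ T m, ‖v‖ ≤ ‖w‖ := by
    intro m
    obtain ⟨x, hx, -⟩ := hB m
    obtain ⟨v, hv, hv2⟩ := exists_norm_eq_iInf_of_complete_convex ⟨x, hx⟩ (hcl m).isComplete
      (hconv m) 0
    refine ⟨v, hv, fun w hw => ?_⟩
    have : ⨅ w : T m, ‖(0:H) - w‖ ≤ ‖(0:H) - (⟨w, hw⟩ : T m)‖ :=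
      ciInf_le ⟨0, by rintro _ ⟨y, rfl⟩; positivity⟩ _
    rw [← hv2] at this
    simpa using this
  choose v hv hmin using h1
  have hmono : Monotone (fun m => ‖v m‖ ^ 2) := by
    intro m l hml
    exact pow_le_pow_left₀ (norm_nonneg _) (hmin m _ (hanti hml (hv l))) 2
  have hbd : BddAbove (range (fun m => ‖v m‖ ^ 2)) := by
    refine ⟨B ^ 2, ?_⟩
    rintro _ ⟨m, rfl⟩
    obtain ⟨x, hx, hxB⟩ := hB m
    exact pow_le_pow_left₀ (norm_nonneg _) ((hmin m x hx).trans hxB) 2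
  have hlim := tendsto_atTop_ciSup hmono hbd
  set S := ⨆ m, ‖v m‖ ^ 2
  have key : ∀ m l, m ≤ l → ‖v m - v l‖ ^ 2 ≤ 2 * (S - ‖v m‖ ^ 2) := by
    intro m l hml
    have hmid : (1/2 : ℝ) • v m + (1/2 : ℝ) • v l ∈ T m :=
      hconv m (hv m) (hanti hml (hv l)) (by norm_num) (by norm_num) (by norm_num)
    have h2 := hmin m _ hmid
    rw [← smul_add, norm_smul] at h2
    have h3 := parallelogram_law_with_norm ℝ (v m) (v l)
    have h4 : ‖v l‖ ^ 2 ≤ S := le_ciSup hbd l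
    norm_num at h2
    nlinarith [norm_nonneg (v m), norm_nonneg (v m + v l)]
  have hc : CauchySeq v := by
    rw [Metric.cauchySeq_iff']
    intro ε hε
    have : ∀ᶠ m in Filter.atTop, S - ε ^ 2 / 2 < ‖v m‖ ^ 2 :=
      hlim.eventually (lt_mem_nhds (by have : 0 < ε ^ 2 := by positivity
                                       linarith))
    obtain ⟨m, hm⟩ := this.exists
    refine ⟨m, fun l hl => ?_⟩
    rw [dist_comm, dist_eq_norm]
    have := key m l hl
    exact lt_of_pow_lt_pow_left₀ 2 hε.le (by linarith)
  obtain ⟨L, hL⟩ := cauchySeq_tendsto_of_complete hc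
  refine ⟨L, fun m => (hcl m).mem_of_tendsto hL ?_⟩
  filter_upwards [Filter.eventually_ge_atTop m] with l hl using hanti hl (hv l)

lemma exists_good_point_s7 (n : ℕ) (hn : 1 ≤ n) (q : ℝ) (hq0 : 0 < q)
    (Q : Set (EuclideanSpace ℝ (Fin n))) (D lam : ℝ) (g : EuclideanSpace ℝ (Fin n) → ℝ)
    (N : Set (EuclideanSpace ℝ (Fin n))) (hN : volume N = 0)
    (hconv : Convex ℝ Q) (hQm : MeasurableSet Q)
    (hQ0 : volume Q ≠ 0) (hQt : volume Q ≠ ⊤) (hD : ∀ x ∈ Q, ∀ y ∈ Q, ‖x - y‖ ≤ D)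
    (hgm : Measurable g) (hlam : 0 < lam)
    (hI : 2 * ∫⁻ x in Q, ENNReal.ofReal (g x) ^ q ≤ ENNReal.ofReal lam ^ q * volume Q)
    (x : EuclideanSpace ℝ (Fin n)) (hx : x ∈ Q) (j : ℕ) :
    ∃ y ∈ Q, y ∉ N ∧ g y ≤ lam * 2 ^ j ∧ ‖x - y‖ ≤ (2:ℝ) ^ (-(j * q / n)) * D := by
  have hn' : (0:ℝ) < n := by exact_mod_cast hn
  set t : ℝ := (2:ℝ) ^ (-(j * q / n)) with ht
  have ht0 : 0 < t := by positivity
  have ht1 : t ≤ 1 := by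
    apply Real.rpow_le_one_of_one_le_of_nonpos (by norm_num)
    have : 0 ≤ j * q / n := by positivity
    linarith
  have htn : t ^ n = (2:ℝ) ^ (-(j * q)) := by
    rw [ht, ← Real.rpow_natCast, ← Real.rpow_mul (by norm_num)]
    congr 1
    field_simp
  by_contra hcon
  push Not at hcon
  set B := {y | ENNReal.ofReal (lam * 2 ^ j) ^ q ≤ ENNReal.ofReal (g y) ^ q} with hB
  have hsub : AffineMap.homothety x t '' Q ⊆ N ∪ (B ∩ Q) := by
    rintro _ ⟨z, hz, rfl⟩
    have hy : AffineMap.homothety x t z ∈ Q := by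
      rw [AffineMap.homothety_apply]
      have := hconv hx hz (sub_nonneg.2 ht1) ht0.le (by ring)
      convert this using 1
      simp only [vsub_eq_sub, vadd_eq_add]
      module
    by_cases hyN : AffineMap.homothety x t z ∈ N
    · exact Or.inl hyN
    · right
      refine ⟨?_, hy⟩
      have hn1 : ‖x - AffineMap.homothety x t z‖ ≤ t * D := by
        have : x - AffineMap.homothety x t z = t • (x - z) := by
          rw [AffineMap.homothety_apply]
          simp only [vsub_eq_sub, vadd_eq_add]
          module
        rw [this, norm_smul, Real.norm_of_nonneg ht0.le]
        exact mul_le_mul_of_nonneg_left (hD x hx z hz) ht0.le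
      by_contra hb
      have : g (AffineMap.homothety x t z) ≤ lam * 2 ^ j := by
        by_contra hg
        push Not at hg
        exact hb (ENNReal.rpow_le_rpow (ENNReal.ofReal_le_ofReal hg.le) hq0.le)
      exact absurd hn1 (not_le.2 (hcon _ hy hyN this))
  have h1 : volume (AffineMap.homothety x t '' Q) ≤ volume (B ∩ Q) := by
    calc _ ≤ volume (N ∪ (B ∩ Q)) := measure_mono hsub
      _ ≤ volume N + volume (B ∩ Q) := measure_union_le _ _
      _ = _ := by rw [hN, zero_add]
  rw [Measure.addHaar_image_homothety, finrank_euclideanSpace_fin,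
    abs_of_nonneg (by positivity), htn] at h1
  have h2 := mul_meas_ge_le_lintegral₀ (μ := volume.restrict Q)
    (f := fun y => ENNReal.ofReal (g y) ^ q)
    (hgm.ennreal_ofReal.pow_const q).aemeasurable (ENNReal.ofReal (lam * 2 ^ j) ^ q)
  have hBm : MeasurableSet B := measurableSet_le measurable_const (hgm.ennreal_ofReal.pow_const q)
  rw [← hB, Measure.restrict_apply hBm] at h2
  have h3 : ENNReal.ofReal (lam * 2 ^ j) ^ q * ENNReal.ofReal ((2:ℝ) ^ (-(j * q)))
      = ENNReal.ofReal lam ^ q := by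
    rw [ENNReal.ofReal_rpow_of_pos (by positivity), ← ENNReal.ofReal_mul (by positivity),
      ENNReal.ofReal_rpow_of_pos hlam]
    congr 1
    rw [Real.mul_rpow hlam.le (by positivity), mul_assoc, ← Real.rpow_natCast,
      ← Real.rpow_mul (by norm_num), ← Real.rpow_add (by norm_num)]
    simp
  have hl0 : ENNReal.ofReal lam ^ q ≠ 0 := by
    rw [ENNReal.ofReal_rpow_of_pos hlam]
    have := Real.rpow_pos_of_pos hlam q
    simpa using this
  have hlt : ENNReal.ofReal lam ^ q ≠ ⊤ := by
    rw [ENNReal.ofReal_rpow_of_pos hlam]; exact ENNReal.ofReal_ne_top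
  have h4 : 2 * (ENNReal.ofReal lam ^ q * volume Q) ≤ ENNReal.ofReal lam ^ q * volume Q := by
    refine le_trans ?_ hI
    gcongr
    rw [← h3, mul_assoc]
    exact (mul_le_mul_right h1 _).trans h2
  have h5 : ENNReal.ofReal lam ^ q * volume Q ≠ 0 := mul_ne_zero hl0 hQ0
  have h6 : ENNReal.ofReal lam ^ q * volume Q ≠ ⊤ := ENNReal.mul_ne_top hlt hQt
  rw [two_mul] at h4
  exact absurd h4 (not_le.2 (ENNReal.lt_add_right h6 h5))

lemma hajlasz_poincare (n : ℕ) (hn : 1 ≤ n) (q : ℝ) (hq0 : 0 < q) (hq1 : q < 1)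
    (hβ : 1 - q / n ≤ q) : ∃ C : ℝ, 0 < C ∧
    ∀ (Q : Set (EuclideanSpace ℝ (Fin n))) (D lam : ℝ) (u g : EuclideanSpace ℝ (Fin n) → ℝ),
    Convex ℝ Q → MeasurableSet Q → volume Q ≠ 0 → volume Q ≠ ⊤ →
    (∀ x ∈ Q, ∀ y ∈ Q, ‖x - y‖ ≤ D) → IsHajlaszGradientOn n u g univ → 0 < lam →
    2 * ∫⁻ x in Q, ENNReal.ofReal (g x) ^ q ≤ ENNReal.ofReal lam ^ q * volume Q →
    ∃ c : ℝ, ∫⁻ x in Q, ENNReal.ofReal |u x - c| ≤ ENNReal.ofReal (C * D * lam) * volume Q := by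
  have hn' : (1:ℝ) ≤ n := by exact_mod_cast hn
  set β := 1 - q / n with hβd
  have hβ0 : 0 < β := by
    have : q / n ≤ q := div_le_self hq0.le hn'
    linarith
  have h2β : 1 < (2:ℝ) ^ β := Real.one_lt_rpow (by norm_num) hβ0
  set A := 2 + 4 / ((2:ℝ) ^ β - 1) with hA
  have hA2 : 2 ≤ A := by
    have : 0 ≤ 4 / ((2:ℝ) ^ β - 1) := div_nonneg (by norm_num) (by linarith)
    linarith
  have hA3 : A + 4 ≤ A * 2 ^ β := by
    have h : 0 < (2:ℝ) ^ β - 1 := by linarith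
    have : 4 / ((2:ℝ) ^ β - 1) * ((2:ℝ) ^ β - 1) = 4 := by field_simp
    rw [hA]; nlinarith
  refine ⟨A * 2, by linarith, ?_⟩
  intro Q D lam u g hconv hQm hQ0 hQt hD hg hlam hI
  obtain ⟨hgm, hg0, N, hN, hHaj⟩ := hg
  have hpt := exists_good_point_s7 n hn q hq0 Q D lam g N hN hconv hQm hQ0 hQt hD hgm hlam hI
  obtain ⟨x0, hx0⟩ := nonempty_of_measure_ne_zero hQ0
  obtain ⟨y0, hy0, hy0N, hgy0, -⟩ := hpt x0 hx0 0
  have hD0 : 0 ≤ D := (norm_nonneg _).trans (hD x0 hx0 x0 hx0)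
  have hind : ∀ j : ℕ, ∀ x ∈ Q, x ∉ N → g x ≤ lam * 2 ^ j →
      |u x - u y0| ≤ A * D * lam * (2:ℝ) ^ (j * β) := by
    intro j
    induction j with
    | zero =>
      intro x hx hxN hgx
      refine (hHaj x ⟨trivial, hxN⟩ y0 ⟨trivial, hy0N⟩).trans ?_
      simp only [pow_zero, mul_one] at hgx hgy0
      have : ‖x - y0‖ * (g x + g y0) ≤ D * (lam + lam) :=
        mul_le_mul (hD x hx y0 hy0) (by linarith) (add_nonneg (hg0 _) (hg0 _)) hD0
      simp
      have : 0 ≤ D * lam := by positivity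
      nlinarith
    | succ j ih =>
      intro x hx hxN hgx
      obtain ⟨y, hy, hyN, hgy, hxy⟩ := hpt x hx j
      have h1 := ih y hy hyN hgy
      have h2 := hHaj x ⟨trivial, hxN⟩ y ⟨trivial, hyN⟩
      have h3 : ‖x - y‖ * (g x + g y) ≤ (2:ℝ) ^ (-(j * q / n)) * D * (4 * (lam * 2 ^ j)) := by
        refine mul_le_mul hxy ?_ (add_nonneg (hg0 _) (hg0 _)) (by positivity)
        rw [pow_succ] at hgx
        have : 0 < lam * 2 ^ j := by positivity
        linarith
      have h4 : (2:ℝ) ^ (-(j * q / n)) * D * (4 * (lam * 2 ^ j))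
          = 4 * D * lam * (2:ℝ) ^ (j * β) := by
        have : (2:ℝ) ^ (j * β) = (2:ℝ) ^ (-(j * q / n)) * 2 ^ j := by
          rw [← Real.rpow_natCast, ← Real.rpow_add (by norm_num)]
          congr 1
          rw [hβd]; ring
        rw [this]; ring
      have h5 : |u x - u y0| ≤ |u x - u y| + |u y - u y0| := abs_sub_le _ _ _
      have h6 : (2:ℝ) ^ (((j + 1 : ℕ) : ℝ) * β) = (2:ℝ) ^ (j * β) * 2 ^ β := by
        rw [← Real.rpow_add (by norm_num)]
        congr 1
        push_cast; ring
      rw [h6]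
      have h7 : 0 ≤ D * lam * (2:ℝ) ^ (j * β) := by positivity
      have h8 := mul_le_mul_of_nonneg_left hA3 h7
      nlinarith
  have hbound : ∀ x ∈ Q, x ∉ N →
      |u x - u y0| ≤ A * D * lam * (1 + 2 * (g x / lam) ^ q) := by
    intro x hx hxN
    have hADl : 0 ≤ A * D * lam := by positivity
    have hgl : 0 ≤ g x / lam := div_nonneg (hg0 x) hlam.le
    by_cases hgx : g x ≤ lam
    · refine (hind 0 x hx hxN (by simpa using hgx)).trans ?_
      refine mul_le_mul_of_nonneg_left ?_ hADl
      have : 0 ≤ (g x / lam) ^ q := by positivity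
      simp; linarith
    · push Not at hgx
      have h1 : 1 ≤ g x / lam := by rw [le_div_iff₀ hlam]; linarith
      obtain ⟨j, hj1, hj2⟩ := exists_nat_pow_near h1 (by norm_num : (1:ℝ) < 2)
      have h2 : g x ≤ lam * 2 ^ (j + 1) := by
        rw [div_lt_iff₀ hlam] at hj2; linarith
      refine (hind (j+1) x hx hxN h2).trans ?_
      refine mul_le_mul_of_nonneg_left ?_ hADl
      have h3 : (2:ℝ) ^ (((j + 1 : ℕ) : ℝ) * β) = ((2:ℝ) ^ j) ^ β * 2 ^ β := by
        rw [← Real.rpow_natCast, ← Real.rpow_mul (by norm_num), ← Real.rpow_add (by norm_num)]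
        congr 1
        push_cast; ring
      have h4 : ((2:ℝ) ^ j) ^ β ≤ (g x / lam) ^ q :=
        (Real.rpow_le_rpow (by positivity) hj1 hβ0.le).trans
          (Real.rpow_le_rpow_of_exponent_le h1 hβ)
      have h5 : (2:ℝ) ^ β ≤ 2 := by
        conv_rhs => rw [← Real.rpow_one 2]
        exact Real.rpow_le_rpow_of_exponent_le (by norm_num) (by linarith)
      rw [h3]
      have : ((2:ℝ) ^ j) ^ β * 2 ^ β ≤ (g x / lam) ^ q * 2 :=
        mul_le_mul h4 h5 (by positivity) (by positivity)
      linarith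
  refine ⟨u y0, ?_⟩
  have hl0 : ENNReal.ofReal lam ^ q ≠ 0 := by
    rw [ENNReal.ofReal_rpow_of_pos hlam]
    have := Real.rpow_pos_of_pos hlam q
    simpa using this
  have hlt : ENNReal.ofReal lam ^ q ≠ ⊤ := by
    rw [ENNReal.ofReal_rpow_of_pos hlam]; exact ENNReal.ofReal_ne_top
  have hNae : ∀ᵐ x ∂(volume.restrict Q), x ∉ N :=
    ae_restrict_of_ae (measure_eq_zero_iff_ae_notMem.1 hN)
  calc ∫⁻ x in Q, ENNReal.ofReal |u x - u y0|
      ≤ ∫⁻ x in Q, ENNReal.ofReal (A * D * lam) *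
          (1 + 2 * ((ENNReal.ofReal lam ^ q)⁻¹ * ENNReal.ofReal (g x) ^ q)) := by
        apply lintegral_mono_ae
        filter_upwards [hNae, ae_restrict_mem hQm] with x hxN hxQ
        refine (ENNReal.ofReal_le_ofReal (hbound x hxQ hxN)).trans ?_
        have hgl : 0 ≤ g x / lam := div_nonneg (hg0 x) hlam.le
        rw [ENNReal.ofReal_mul (p := A * D * lam) (by positivity), ENNReal.ofReal_add (by norm_num) (by positivity),
          ENNReal.ofReal_mul (p := 2) (by norm_num), ← ENNReal.ofReal_rpow_of_nonneg hgl hq0.le,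
          ENNReal.ofReal_div_of_pos hlam, ENNReal.div_rpow_of_nonneg _ _ hq0.le]
        simp [div_eq_mul_inv, mul_comm]
    _ = ENNReal.ofReal (A * D * lam) * (volume Q + (ENNReal.ofReal lam ^ q)⁻¹ *
          (2 * ∫⁻ x in Q, ENNReal.ofReal (g x) ^ q)) := by
        have hm := hgm.ennreal_ofReal.pow_const q
        rw [lintegral_const_mul _ (by fun_prop), lintegral_add_left measurable_const,
          lintegral_const_mul _ (by fun_prop), lintegral_const_mul _ hm]
        simp only [lintegral_const, one_mul, Measure.restrict_apply_univ]
        ring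
    _ ≤ ENNReal.ofReal (A * D * lam) * (volume Q + volume Q) := by
        gcongr
        rw [ENNReal.inv_mul_le_iff hl0 hlt]
        exact hI
    _ = _ := by
        rw [← two_mul, ← mul_assoc]
        congr 1
        rw [← ENNReal.ofReal_ofNat 2, ← ENNReal.ofReal_mul (by positivity)]
        congr 1; ring

def cell (n N : ℕ) (z : Fin n → ℤ) : Set (EuclideanSpace ℝ (Fin n)) :=
  {x | ∀ i, ⌊((N:ℝ) + 1) * x i⌋ = z i}

def cellIdx (n N : ℕ) (x : EuclideanSpace ℝ (Fin n)) : Fin n → ℤ :=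
  fun i => ⌊((N:ℝ) + 1) * x i⌋

lemma mem_cell_iff (n N : ℕ) (z : Fin n → ℤ) (x : EuclideanSpace ℝ (Fin n)) :
    x ∈ cell n N z ↔ cellIdx n N x = z := by
  simp only [cell, cellIdx, mem_ofPred_eq, funext_iff]

lemma measurable_cellIdx (n N : ℕ) : Measurable (cellIdx n N) := by
  unfold cellIdx
  refine measurable_pi_lambda _ fun i => ?_
  exact Int.measurable_floor.comp (by fun_prop)

lemma cell_eq (n N : ℕ) (z : Fin n → ℤ) :
    cell n N z = {x | ∀ i, (z i : ℝ) / (N + 1) ≤ x i ∧ x i < (z i + 1) / ((N:ℝ) + 1)} := by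
  have hN : (0:ℝ) < N + 1 := by positivity
  ext x
  simp only [cell, mem_ofPred_eq]
  refine forall_congr' fun i => ?_
  rw [Int.floor_eq_iff, div_le_iff₀ hN, lt_div_iff₀ hN, mul_comm]

lemma measurableSet_cell (n N : ℕ) (z : Fin n → ℤ) : MeasurableSet (cell n N z) := by
  have : cell n N z = cellIdx n N ⁻¹' {z} := by
    ext x; simp [mem_cell_iff]
  rw [this]
  exact measurable_cellIdx n N (measurableSet_singleton z)

lemma convex_cell (n N : ℕ) (z : Fin n → ℤ) : Convex ℝ (cell n N z) := by
  rw [cell_eq]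
  intro x hx y hy a b ha hb hab i
  have h := (convex_Ico ((z i : ℝ) / (N + 1)) ((z i + 1) / ((N:ℝ) + 1))) (hx i) (hy i) ha hb hab
  simpa using h

lemma cell_diam (n N : ℕ) (z : Fin n → ℤ) :
    ∀ x ∈ cell n N z, ∀ y ∈ cell n N z, ‖x - y‖ ≤ √n * ((N:ℝ) + 1)⁻¹ := by
  intro x hx y hy
  have hN : (0:ℝ) < N + 1 := by positivity
  rw [cell_eq] at hx hy
  rw [EuclideanSpace.norm_eq]
  have : ∑ i, ‖(x - y).ofLp i‖ ^ 2 ≤ n * (((N:ℝ) + 1)⁻¹) ^ 2 := by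
    calc _ ≤ ∑ i : Fin n, (((N:ℝ) + 1)⁻¹) ^ 2 := by
          refine Finset.sum_le_sum fun i _ => ?_
          refine pow_le_pow_left₀ (norm_nonneg _) ?_ 2
          rw [Real.norm_eq_abs, abs_le]
          have h1 := hx i
          have h2 := hy i
          have h3 : ((z i : ℝ) + 1) / ((N:ℝ) + 1) = z i / (N + 1) + ((N:ℝ) + 1)⁻¹ := by
            rw [add_div, one_div]
          rw [h3] at h1 h2
          simp only [PiLp.sub_apply]
          constructor <;> linarith [h1.1, h1.2, h2.1, h2.2]
      _ = _ := by simp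
  calc _ ≤ √(n * (((N:ℝ) + 1)⁻¹) ^ 2) := Real.sqrt_le_sqrt this
    _ = _ := by rw [Real.sqrt_mul (by positivity), Real.sqrt_sq (by positivity)]

lemma volume_cell (n N : ℕ) (z : Fin n → ℤ) :
    volume (cell n N z) = ENNReal.ofReal ((((N:ℝ) + 1)⁻¹) ^ n) := by
  have h : cell n N z = (@WithLp.ofLp 2 (Fin n → ℝ)) ⁻¹'
      (Set.pi univ fun i => Ico ((z i : ℝ) / (N + 1)) ((z i + 1) / ((N:ℝ) + 1))) := by
    rw [cell_eq]; ext x; simp [Set.mem_pi]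
  rw [h, (PiLp.volume_preserving_ofLp (Fin n)).measure_preimage
    (MeasurableSet.univ_pi fun i => measurableSet_Ico).nullMeasurableSet, volume_pi_pi]
  simp only [Real.volume_Ico]
  have : ∀ i, ((z i : ℝ) + 1) / ((N:ℝ) + 1) - z i / (N + 1) = ((N:ℝ) + 1)⁻¹ := by
    intro i; rw [add_div, one_div]; ring
  simp only [this]
  rw [Finset.prod_const, Finset.card_univ, Fintype.card_fin, ENNReal.ofReal_pow (by positivity)]

/-- The finitely many cells meeting the ball of radius `R`. -/
lemma exists_cells (n N : ℕ) (R : ℝ) : ∃ Z : Finset (Fin n → ℤ),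
    ball (0 : EuclideanSpace ℝ (Fin n)) R ⊆ ⋃ z ∈ Z, cell n N z ∧
    (⋃ z ∈ Z, cell n N z) ⊆ ball (0 : EuclideanSpace ℝ (Fin n)) (R + √n + 1) := by
  classical
  have hfin : (cellIdx n N '' ball (0 : EuclideanSpace ℝ (Fin n)) R).Finite := by
    set M : ℤ := ⌈((N:ℝ) + 1) * R⌉ + 1 with hM
    refine Set.Finite.subset (Set.finite_Icc (fun _ : Fin n => -M) (fun _ => M)) ?_
    rintro _ ⟨x, hx, rfl⟩
    rw [mem_ball_zero_iff] at hx
    have hc : ∀ i, |((N:ℝ) + 1) * x i| ≤ ((N:ℝ) + 1) * R := by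
      intro i
      rw [abs_mul, abs_of_pos (by positivity : (0:ℝ) < N + 1)]
      refine mul_le_mul_of_nonneg_left ?_ (by positivity)
      exact (by simpa using PiLp.norm_apply_le x i : |x i| ≤ ‖x‖).trans hx.le
    constructor
    · intro i
      simp only [cellIdx, Int.le_floor]
      have h1 := (abs_le.1 (hc i)).1
      have h2 := Int.le_ceil (((N:ℝ) + 1) * R)
      rw [hM]; push_cast; linarith
    · intro i
      simp only [cellIdx]
      rw [Int.floor_le_iff]
      have h1 := (abs_le.1 (hc i)).2
      have h2 := Int.le_ceil (((N:ℝ) + 1) * R)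
      rw [hM]; push_cast; linarith
  refine ⟨hfin.toFinset, ?_, ?_⟩
  · intro x hx
    simp only [mem_iUnion, Set.Finite.mem_toFinset]
    exact ⟨cellIdx n N x, ⟨x, hx, rfl⟩, by rw [mem_cell_iff]⟩
  · intro y hy
    simp only [mem_iUnion, Set.Finite.mem_toFinset] at hy
    obtain ⟨_, ⟨x, hx, rfl⟩, hy⟩ := hy
    have := cell_diam n N _ y hy x (by rw [mem_cell_iff])
    rw [mem_ball_zero_iff] at hx ⊢
    have h2 : √n * ((N:ℝ) + 1)⁻¹ ≤ √n := by
      refine mul_le_of_le_one_right (Real.sqrt_nonneg _) ?_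
      exact inv_le_one_of_one_le₀ (by simp)
    have h3 : ‖y‖ ≤ ‖y - x‖ + ‖x‖ := by simpa using norm_add_le (y - x) x
    linarith

lemma rpow_add_le_two (s a b : ℝ) (hs : 0 < s) (ha : 0 ≤ a) (hb : 0 ≤ b) :
    (a + b) ^ s ≤ 2 ^ s * (a ^ s + b ^ s) := by
  have h1 : a + b ≤ 2 * max a b := by
    have := le_max_left a b; have := le_max_right a b; linarith
  have h0 : 0 ≤ max a b := le_max_of_le_left ha
  calc (a + b) ^ s ≤ (2 * max a b) ^ s := Real.rpow_le_rpow (by positivity) h1 hs.le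
    _ = 2 ^ s * (max a b) ^ s := Real.mul_rpow (by norm_num) h0
    _ ≤ _ := by
      refine mul_le_mul_of_nonneg_left ?_ (by positivity)
      have : 0 ≤ a ^ s := by positivity
      have : 0 ≤ b ^ s := by positivity
      rcases max_cases a b with ⟨h, -⟩ | ⟨h, -⟩ <;> rw [h] <;> linarith

/-- Admissible functions for the tails of a sequence. -/
def tailSet (n : ℕ) (s : ℝ) (f : ℕ → EuclideanSpace ℝ (Fin n) → ℝ) (m : ℕ) :
    Set (Lp ℝ 2 (volume : Measure (EuclideanSpace ℝ (Fin n)))) :=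
  {h | ∃ N : Set (EuclideanSpace ℝ (Fin n)), volume N = 0 ∧ ∀ x ∉ N, ∀ y ∉ N, ∀ a : ℝ,
    (∀ k, m ≤ k → a ≤ |f k x - f k y| ^ s) → a ≤ (2 * ‖x - y‖) ^ s * (h x + h y)}

lemma tailSet_convex (n : ℕ) (s : ℝ) (f : ℕ → EuclideanSpace ℝ (Fin n) → ℝ) (m : ℕ) :
    Convex ℝ (tailSet n s f m) := by
  rintro h1 ⟨N1, hN1, H1⟩ h2 ⟨N2, hN2, H2⟩ a b ha hb hab
  have hae : ∀ᵐ x ∂(volume : Measure (EuclideanSpace ℝ (Fin n))),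
      (a • h1 + b • h2 : Lp ℝ 2 (volume : Measure (EuclideanSpace ℝ (Fin n)))) x
        = a * h1 x + b * h2 x := by
    filter_upwards [Lp.coeFn_add (a • h1) (b • h2), Lp.coeFn_smul a h1, Lp.coeFn_smul b h2]
      with x hx1 hx2 hx3
    rw [hx1, Pi.add_apply, hx2, hx3]
    simp
  have hall := (measure_eq_zero_iff_ae_notMem.1 hN1).and
    ((measure_eq_zero_iff_ae_notMem.1 hN2).and hae)
  refine ⟨_, hall, ?_⟩
  intro x hx y hy c hc
  simp only [mem_compl_iff, mem_ofPred_eq, not_not] at hx hy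
  have e1 := H1 x hx.1 y hy.1 c hc
  have e2 := H2 x hx.2.1 y hy.2.1 c hc
  rw [hx.2.2, hy.2.2]
  have : c = a * c + b * c := by rw [← add_mul, hab, one_mul]
  rw [this]
  have := mul_le_mul_of_nonneg_left e1 ha
  have := mul_le_mul_of_nonneg_left e2 hb
  linarith

lemma tailSet_closed (n : ℕ) (s : ℝ) (f : ℕ → EuclideanSpace ℝ (Fin n) → ℝ) (m : ℕ) :
    IsClosed (tailSet n s f m) := by
  refine IsSeqClosed.isClosed ?_
  intro h L hh hL
  obtain ⟨ns, -, hns⟩ := (tendstoInMeasure_of_tendsto_Lp hL).exists_seq_tendsto_ae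
  choose N hN H using hh
  have hall := hns.and (ae_all_iff.2 fun i => measure_eq_zero_iff_ae_notMem.1 (hN i))
  refine ⟨_, hall, ?_⟩
  intro x hx y hy c hc
  simp only [mem_compl_iff, mem_ofPred_eq, not_not] at hx hy
  refine ge_of_tendsto ((hx.1.add hy.1).const_mul ((2 * ‖x - y‖) ^ s)) ?_
  exact Filter.Eventually.of_forall fun i => H (ns i) x (hx.2 _) y (hy.2 _) c hc

lemma exists_limit_gradient (n : ℕ) (p : ℝ) (hp : 0 < p)
    (f g : ℕ → EuclideanSpace ℝ (Fin n) → ℝ) (F : EuclideanSpace ℝ (Fin n) → ℝ)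
    (hg : ∀ k, IsHajlaszGradientOn n (f k) (g k) univ) (M : ℝ≥0∞) (hM : M ≠ ⊤)
    (hgM : ∀ k, ∫⁻ x, ENNReal.ofReal |g k x| ^ p ≤ M)
    (hF : ∀ᵐ x, Filter.Tendsto (fun k => f k x) Filter.atTop (nhds (F x))) :
    ∃ G, IsHajlaszGradientOn n F G univ ∧ lpNorm n p G volume ≠ ⊤ := by
  set s := p / 2 with hs
  have hs0 : 0 < s := by positivity
  have hnorm : ∀ k, ∀ x, ‖(g k x) ^ s‖ₑ = ENNReal.ofReal |g k x| ^ s := by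
    intro k x
    have h0 := (hg k).2.1 x
    rw [Real.enorm_eq_ofReal (by positivity), abs_of_nonneg h0,
      ENNReal.ofReal_rpow_of_nonneg h0 hs0.le]
  have heL : ∀ k, eLpNorm (fun x => g k x ^ s) 2 volume ≤ M ^ (1 / 2 : ℝ) := by
    intro k
    rw [eLpNorm_eq_lintegral_rpow_enorm_toReal (by norm_num) (by norm_num)]
    simp only [ENNReal.toReal_ofNat]
    refine ENNReal.rpow_le_rpow ?_ (by norm_num)
    refine le_trans (le_of_eq ?_) (hgM k)
    refine lintegral_congr fun x => ?_
    rw [hnorm, ← ENNReal.rpow_mul]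
    congr 1; rw [hs]; ring
  have hMt : M ^ (1 / 2 : ℝ) ≠ ⊤ := ENNReal.rpow_ne_top_of_nonneg (by norm_num) hM
  have hmem : ∀ k, MemLp (fun x => g k x ^ s) 2 volume := fun k =>
    ⟨((hg k).1.pow_const s).aestronglyMeasurable, (heL k).trans_lt hMt.lt_top⟩
  obtain ⟨h, hh⟩ := nested_convex (tailSet n s f)
    (by
      rintro m l hml h ⟨N, hN, H⟩
      exact ⟨N, hN, fun x hx y hy a ha => H x hx y hy a fun k hk => ha k (hk.trans' hml)⟩)
    (tailSet_convex n s f) (tailSet_closed n s f) (M ^ (1 / 2 : ℝ)).toReal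
    (by
      intro m
      refine ⟨(hmem m).toLp, ?_, ?_⟩
      · obtain ⟨-, hg0, N, hN, H⟩ := hg m
        have hall := (measure_eq_zero_iff_ae_notMem.1 hN).and (hmem m).coeFn_toLp
        refine ⟨_, hall, ?_⟩
        intro x hx y hy c hc
        simp only [mem_compl_iff, mem_ofPred_eq, not_not] at hx hy
        rw [hx.2, hy.2]
        refine (hc m le_rfl).trans ?_
        refine (Real.rpow_le_rpow (abs_nonneg _) (H x ⟨trivial, hx.1⟩ y ⟨trivial, hy.1⟩)
          hs0.le).trans ?_
        rw [Real.mul_rpow (norm_nonneg _) (add_nonneg (hg0 _) (hg0 _)),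
          Real.mul_rpow (by norm_num) (norm_nonneg _), mul_comm ((2:ℝ) ^ s), mul_assoc]
        exact mul_le_mul_of_nonneg_left (rpow_add_le_two s _ _ hs0 (hg0 _) (hg0 _))
          (by positivity)
      · rw [Lp.norm_toLp]
        exact ENNReal.toReal_mono hMt (heL m))
  choose N hN H using hh
  have hall := hF.and (ae_all_iff.2 fun i => measure_eq_zero_iff_ae_notMem.1 (hN i))
  set c : ℝ := 2 * 2 ^ s⁻¹ with hc
  have hc0 : 0 ≤ c := by positivity
  refine ⟨fun x => c * |h x| ^ s⁻¹, ⟨?_, fun x => by positivity, _, hall, ?_⟩, ?_⟩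
  · have hm : Measurable h := (Lp.stronglyMeasurable h).measurable
    exact ((measurable_norm.comp hm).pow_const _).const_mul c
  · rintro x ⟨-, hx⟩ y ⟨-, hy⟩
    simp only [mem_compl_iff, mem_ofPred_eq, not_not] at hx hy
    have hT : Filter.Tendsto (fun k => |f k x - f k y| ^ s) Filter.atTop
        (nhds (|F x - F y| ^ s)) :=
      ((hx.1.sub hy.1).abs).rpow_const (Or.inr hs0.le)
    have h1 : |F x - F y| ^ s ≤ (2 * ‖x - y‖) ^ s * (h x + h y) := by
      refine le_of_forall_lt fun a ha => ?_
      obtain ⟨b, hab, hb⟩ := exists_between ha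
      obtain ⟨m, hm⟩ := Filter.eventually_atTop.1 (hT.eventually (lt_mem_nhds hb))
      exact hab.trans_le (H m x (hx.2 m) y (hy.2 m) b fun k hk => (hm k hk).le)
    have h2 : |F x - F y| ^ s ≤ (2 * ‖x - y‖) ^ s * (|h x| + |h y|) :=
      h1.trans (mul_le_mul_of_nonneg_left (add_le_add (le_abs_self _) (le_abs_self _))
        (by positivity))
    have h3 := Real.rpow_le_rpow (by positivity) h2 (inv_nonneg.2 hs0.le)
    rw [Real.rpow_rpow_inv (abs_nonneg _) hs0.ne', Real.mul_rpow (by positivity) (by positivity),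
      Real.rpow_rpow_inv (by positivity) hs0.ne'] at h3
    refine h3.trans ?_
    have h4 := rpow_add_le_two s⁻¹ |h x| |h y| (inv_pos.2 hs0) (abs_nonneg _) (abs_nonneg _)
    have h5 := mul_le_mul_of_nonneg_left h4 (by positivity : 0 ≤ 2 * ‖x - y‖)
    refine h5.trans (le_of_eq ?_)
    rw [hc]; ring
  · unfold _root_.lpNorm
    refine ENNReal.rpow_ne_top_of_nonneg (by positivity) ?_
    have e : ∀ x, ENNReal.ofReal |c * |h x| ^ s⁻¹| ^ p = ENNReal.ofReal c ^ p * ‖h x‖ₑ ^ (2:ℝ) := by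
      intro x
      rw [abs_of_nonneg (by positivity), ENNReal.ofReal_mul hc0,
        ENNReal.mul_rpow_of_nonneg _ _ hp.le,
        ← ENNReal.ofReal_rpow_of_nonneg (abs_nonneg _) (inv_nonneg.2 hs0.le),
        ← ENNReal.rpow_mul, Real.enorm_eq_ofReal_abs]
      congr 2
      rw [hs]; field_simp
    simp only [e]
    rw [lintegral_const_mul' _ _ (ENNReal.rpow_ne_top_of_nonneg hp.le ENNReal.ofReal_ne_top)]
    refine ENNReal.mul_ne_top (ENNReal.rpow_ne_top_of_nonneg hp.le ENNReal.ofReal_ne_top) ?_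
    have := lintegral_rpow_enorm_lt_top_of_eLpNorm_lt_top (by norm_num) (by norm_num)
      (Lp.memLp h).2
    simpa using this.ne

lemma cell_poincare (n : ℕ) (hn : 1 ≤ n) (q : ℝ) (hq : (n:ℝ) / (n + 1) < q) (hq1 : q < 1) :
    ∃ δ : ℕ → ℝ, Filter.Tendsto δ Filter.atTop (nhds 0) ∧
    ∀ u g : EuclideanSpace ℝ (Fin n) → ℝ, IsHajlaszGradientOn n u g univ → ∀ N z,
      ∫⁻ x in cell n N z, ENNReal.ofReal (g x) ^ q ≠ ⊤ →
      ∃ c : ℝ, ∫⁻ x in cell n N z, ENNReal.ofReal |u x - c| ≤ ENNReal.ofReal (δ N) *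
        ((∫⁻ x in cell n N z, ENNReal.ofReal (g x) ^ q) + volume (cell n N z)) ^ (1 / q) := by
  have hn' : (1:ℝ) ≤ n := by exact_mod_cast hn
  have hn0 : (0:ℝ) < n := by linarith
  have hq0 : 0 < q := lt_of_le_of_lt (by positivity) hq
  rw [div_lt_iff₀ (by linarith)] at hq
  have hβ : 1 - q / n ≤ q := by
    have : q / n = q * (n + 1) / n - q := by field_simp; ring
    have h2 : 1 ≤ q * (n + 1) / n := by rw [le_div_iff₀ hn0]; linarith
    linarith
  obtain ⟨C, hC, H⟩ := hajlasz_poincare n hn q hq0 hq1 hβ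
  refine ⟨fun N => C * √n * 2 ^ (1 / q) *
    ((((N:ℝ) + 1)⁻¹) * (((N:ℝ) + 1)⁻¹) ^ n * ((((N:ℝ) + 1)⁻¹) ^ n) ^ (-(1 / q))), ?_, ?_⟩
  · rw [← mul_zero (C * √n * 2 ^ (1 / q))]
    refine Filter.Tendsto.const_mul _ ?_
    have he : 0 < 1 + n - n / q := by
      have : n / q < n + 1 := by rw [div_lt_iff₀ hq0]; linarith
      linarith
    have h1 : Filter.Tendsto (fun N : ℕ => (((N:ℝ) + 1)⁻¹) ^ (1 + n - n / q)) Filter.atTop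
        (nhds (0 ^ (1 + n - n / q))) := by
      refine Filter.Tendsto.rpow_const ?_ (Or.inr he.le)
      simpa using tendsto_one_div_add_atTop_nhds_zero_nat (𝕜 := ℝ)
    rw [Real.zero_rpow he.ne'] at h1
    refine h1.congr fun N => ?_
    have ha : 0 < ((N:ℝ) + 1)⁻¹ := by positivity
    rw [← Real.rpow_natCast, ← Real.rpow_mul ha.le]
    nth_rw 2 [← Real.rpow_one ((N:ℝ) + 1)⁻¹]
    rw [← Real.rpow_add ha, ← Real.rpow_add ha]
    congr 1
    ring
  · intro u g hg N z hI
    set a := ((N:ℝ) + 1)⁻¹ with ha'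
    have ha : 0 < a := by positivity
    set I := ∫⁻ x in cell n N z, ENNReal.ofReal (g x) ^ q with hId
    have hv := volume_cell n N z
    rw [← ha'] at hv
    set v := a ^ n with hvd
    have hv0 : 0 < v := by positivity
    set i := I.toReal with hi
    have hi0 : 0 ≤ i := ENNReal.toReal_nonneg
    have hIi : I = ENNReal.ofReal i := (ENNReal.ofReal_toReal hI).symm
    have hlq : ((2 * (i + v) / v) ^ (1 / q)) ^ q = 2 * (i + v) / v := by
      rw [← Real.rpow_mul (by positivity), one_div, inv_mul_cancel₀ hq0.ne', Real.rpow_one]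
    have hl0 : 0 < (2 * (i + v) / v) ^ (1 / q) := by positivity
    obtain ⟨c, hc⟩ := H (cell n N z) (√n * a) ((2 * (i + v) / v) ^ (1 / q)) u g
      (convex_cell n N z) (measurableSet_cell n N z)
      (by rw [hv]; simpa using hv0) (by rw [hv]; exact ENNReal.ofReal_ne_top)
      (cell_diam n N z) hg hl0
      (by
        rw [← hId, hv, ENNReal.ofReal_rpow_of_pos hl0, hlq, ← ENNReal.ofReal_mul (by positivity),
          hIi, ← ENNReal.ofReal_ofNat 2, ← ENNReal.ofReal_mul (by norm_num)]
        refine ENNReal.ofReal_le_ofReal ?_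
        rw [div_mul_cancel₀ _ hv0.ne']
        linarith)
    refine ⟨c, hc.trans (le_of_eq ?_)⟩
    rw [hv, hIi, ← ENNReal.ofReal_add hi0 hv0.le, ENNReal.ofReal_rpow_of_nonneg (by positivity)
      (by positivity), ← ENNReal.ofReal_mul (by positivity), ← ENNReal.ofReal_mul (by positivity)]
    congr 1
    change _ = C * √n * 2 ^ (1 / q) * (a * v * v ^ (-(1 / q))) * (i + v) ^ (1 / q)
    rw [Real.div_rpow (by positivity) hv0.le, Real.mul_rpow (by norm_num) (by positivity),
      Real.rpow_neg hv0.le]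
    field_simp

lemma sum_rpow_le {ι : Type*} (Z : Finset ι) (a : ι → ℝ≥0∞) (s : ℝ) (hs : 1 ≤ s) :
    ∑ z ∈ Z, a z ^ s ≤ (∑ z ∈ Z, a z) ^ s := by
  classical
  induction Z using Finset.induction_on with
  | empty => simp
  | insert z Z hz ih =>
    rw [Finset.sum_insert hz, Finset.sum_insert hz]
    exact (add_le_add le_rfl ih).trans (ENNReal.add_rpow_le_rpow_add _ _ hs)

lemma rpow_le_one_add (a : ℝ≥0∞) (q p : ℝ) (hq : 0 ≤ q) (hqp : q ≤ p) :
    a ^ q ≤ 1 + a ^ p := by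
  rcases le_total a 1 with h | h
  · exact (ENNReal.rpow_le_one h hq).trans le_self_add
  · exact (ENNReal.rpow_le_rpow_of_exponent_le h hqp).trans le_add_self

lemma lintegral_q_le {α : Type*} [MeasurableSpace α] (μ : Measure α) (S : Set α) (h : α → ℝ≥0∞)
    (q p : ℝ) (hq : 0 ≤ q) (hqp : q ≤ p) :
    ∫⁻ x in S, h x ^ q ∂μ ≤ μ S + ∫⁻ x in S, h x ^ p ∂μ := by
  calc _ ≤ ∫⁻ x in S, (1 + h x ^ p) ∂μ := lintegral_mono fun x => rpow_le_one_add _ q p hq hqp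
    _ = _ := by rw [lintegral_add_left measurable_const]; simp

lemma exists_cauchy_subseq
    (n : ℕ) (hn : 1 ≤ n) (p q : ℝ) (hq : (n : ℝ) / (n + 1) < q) (hq1 : q < 1) (hqp : q ≤ p)
    (f : ℕ → EuclideanSpace ℝ (Fin n) → ℝ)
    (hfm : ∀ k, AEStronglyMeasurable (f k) volume)
    (g : ℕ → EuclideanSpace ℝ (Fin n) → ℝ)
    (hg : ∀ k, IsHajlaszGradientOn n (f k) (g k) univ) (M : ℝ≥0∞) (hM : M ≠ ⊤)
    (hfM : ∀ k, ∫⁻ x, ENNReal.ofReal |f k x| ^ p ≤ M)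
    (hgM : ∀ k, ∫⁻ x, ENNReal.ofReal |g k x| ^ p ≤ M) :
    ∃ φ : ℕ → ℕ, StrictMono φ ∧ ∀ (R ε : ℝ), 0 < ε →
      ∃ s : EuclideanSpace ℝ (Fin n) → ℝ, Measurable s ∧ ∀ᶠ i in Filter.atTop,
        ∫⁻ x in ball 0 R, ENNReal.ofReal |f (φ i) x - s x| ≤ ENNReal.ofReal ε := by
  have hq0 : 0 < q := lt_of_le_of_lt (by positivity) hq
  obtain ⟨δ, hδ, H⟩ := cell_poincare n hn q hq hq1
  have hgS : ∀ k (S : Set (EuclideanSpace ℝ (Fin n))),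
      ∫⁻ x in S, ENNReal.ofReal (g k x) ^ q ≤ volume S + M := by
    intro k S
    refine (lintegral_q_le volume S _ q p hq0.le hqp).trans ?_
    gcongr
    refine (setLIntegral_le_lintegral _ _).trans (le_trans (le_of_eq ?_) (hgM k))
    refine lintegral_congr fun x => ?_
    rw [abs_of_nonneg ((hg k).2.1 x)]
  have hfS : ∀ k (S : Set (EuclideanSpace ℝ (Fin n))),
      ∫⁻ x in S, ENNReal.ofReal |f k x| ^ q ≤ volume S + M := by
    intro k S
    refine (lintegral_q_le volume S _ q p hq0.le hqp).trans ?_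
    gcongr
    exact (setLIntegral_le_lintegral _ _).trans (hfM k)
  have hvt : ∀ N z, volume (cell n N z) ≠ ⊤ := fun N z => by
    rw [volume_cell]; exact ENNReal.ofReal_ne_top
  have hv0 : ∀ N z, volume (cell n N z) ≠ 0 := fun N z => by
    rw [volume_cell]
    have : 0 < (((N:ℝ) + 1)⁻¹) ^ n := by positivity
    simpa using this
  have hIt : ∀ k N z, ∫⁻ x in cell n N z, ENNReal.ofReal (g k x) ^ q ≠ ⊤ := fun k N z =>
    ((hgS k _).trans_lt (ENNReal.add_lt_top.2 ⟨(hvt N z).lt_top, hM.lt_top⟩)).ne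
  have hex : ∀ k (j : ℕ × (Fin n → ℤ)), ∃ c : ℝ, ∫⁻ x in cell n j.1 j.2,
      ENNReal.ofReal |f k x - c| ≤ ENNReal.ofReal (δ j.1) *
        ((∫⁻ x in cell n j.1 j.2, ENNReal.ofReal (g k x) ^ q)
          + volume (cell n j.1 j.2)) ^ (1 / q) :=
    fun k j => H (f k) (g k) (hg k) j.1 j.2 (hIt k j.1 j.2)
  choose c hc using hex
  -- the constants are bounded
  have hcb : ∀ j, ∃ b : ℝ, ∀ k, |c k j| ≤ b := by
    intro j
    set v := volume (cell n j.1 j.2) with hv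
    set W : ℝ≥0∞ := (v + M) + (v + ENNReal.ofReal (δ j.1) * ((v + M) + v) ^ (1 / q)) with hW
    have hvt' : v ≠ ⊤ := hvt _ _
    have hvM : v + M ≠ ⊤ := ENNReal.add_ne_top.2 ⟨hvt', hM⟩
    have hWt : W ≠ ⊤ := by
      refine ENNReal.add_ne_top.2 ⟨hvM, ENNReal.add_ne_top.2 ⟨hvt', ?_⟩⟩
      refine ENNReal.mul_ne_top ENNReal.ofReal_ne_top
        (ENNReal.rpow_ne_top_of_nonneg (by positivity) (ENNReal.add_ne_top.2 ⟨hvM, hvt'⟩))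
    have hWv : (W / v) ^ (1 / q) ≠ ⊤ :=
      ENNReal.rpow_ne_top_of_nonneg (by positivity) (ENNReal.div_ne_top hWt (hv0 _ _))
    refine ⟨((W / v) ^ (1 / q)).toReal, fun k => ?_⟩
    rw [← ENNReal.ofReal_le_iff_le_toReal hWv]
    have h1 : ENNReal.ofReal |c k j| ^ q * v ≤ W := by
      calc ENNReal.ofReal |c k j| ^ q * v = ∫⁻ x in cell n j.1 j.2, ENNReal.ofReal |c k j| ^ q := by
            simp [hv]
        _ ≤ ∫⁻ x in cell n j.1 j.2,
            (ENNReal.ofReal |f k x| ^ q + ENNReal.ofReal |f k x - c k j| ^ q) := by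
            refine lintegral_mono fun x => ?_
            refine le_trans ?_ (ENNReal.rpow_add_le_add_rpow _ _ hq0.le hq1.le)
            refine ENNReal.rpow_le_rpow ?_ hq0.le
            rw [← ENNReal.ofReal_add (abs_nonneg _) (abs_nonneg _)]
            refine ENNReal.ofReal_le_ofReal ?_
            have := abs_sub_abs_le_abs_sub (c k j) (f k x)
            rw [abs_sub_comm] at this
            linarith
        _ = (∫⁻ x in cell n j.1 j.2, ENNReal.ofReal |f k x| ^ q) +
            ∫⁻ x in cell n j.1 j.2, ENNReal.ofReal |f k x - c k j| ^ q := by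
            refine lintegral_add_left' ?_ _
            have h1 := (hfm k).aemeasurable.restrict (s := cell n j.1 j.2)
            have h2 : AEMeasurable (fun x => |f k x|) (volume.restrict (cell n j.1 j.2)) :=
              measurable_norm.comp_aemeasurable h1
            exact h2.ennreal_ofReal.pow_const q
        _ ≤ W := by
            refine add_le_add (hfS k _) ?_
            refine (lintegral_q_le volume _ _ q 1 hq0.le hq1.le).trans ?_
            gcongr
            simp only [ENNReal.rpow_one]
            refine (hc k j).trans ?_
            gcongr
            exact hgS k _
    rw [one_div, ENNReal.le_rpow_inv_iff hq0,
      ENNReal.le_div_iff_mul_le (Or.inl (hv0 _ _)) (Or.inl (hvt _ _))]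
    exact h1
  choose b hb using hcb
  obtain ⟨cinf, -, φ, hφ, hlim⟩ := (isCompact_univ_pi fun j => isCompact_Icc (a := -b j) (b := b j)).tendsto_subseq
    (x := c) (fun k j _ => abs_le.1 (hb j k))
  rw [tendsto_pi_nhds] at hlim
  refine ⟨φ, hφ, fun R ε hε => ?_⟩
  set V := volume (ball (0 : EuclideanSpace ℝ (Fin n)) (R + √n + 1)) with hV
  have hVt : V ≠ ⊤ := measure_ball_lt_top.ne
  set B : ℝ≥0∞ := ((V + M) + V) ^ (1 / q) with hB
  have hBt : B ≠ ⊤ := ENNReal.rpow_ne_top_of_nonneg (by positivity)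
    (ENNReal.add_ne_top.2 ⟨ENNReal.add_ne_top.2 ⟨hVt, hM⟩, hVt⟩)
  have hε2 : 0 < ENNReal.ofReal (ε / 2) := by simpa using hε
  obtain ⟨N, hN⟩ : ∃ N, ENNReal.ofReal (δ N) * B ≤ ENNReal.ofReal (ε / 2) := by
    have h1 : Filter.Tendsto (fun N => ENNReal.ofReal (δ N) * B) Filter.atTop (nhds 0) := by
      have := ENNReal.Tendsto.mul_const (b := B) (ENNReal.tendsto_ofReal hδ) (Or.inr hBt)
      simpa using this
    exact (h1.eventually (ge_mem_nhds hε2)).exists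
  obtain ⟨Z, hZ1, hZ2⟩ := exists_cells n N R
  have hdisj : Set.PairwiseDisjoint (Z : Set (Fin n → ℤ)) (cell n N) := by
    intro z _ z' _ hzz'
    refine Set.disjoint_left.2 fun x hx hx' => hzz' ?_
    rw [mem_cell_iff] at hx hx'
    rw [← hx, hx']
  have hmeas : ∀ z ∈ Z, MeasurableSet (cell n N z) := fun z _ => measurableSet_cell n N z
  refine ⟨fun x => cinf (N, cellIdx n N x), ?_, ?_⟩
  · exact (measurable_of_countable (fun z : Fin n → ℤ => cinf (N, z))).comp (measurable_cellIdx n N)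
  have htail : Filter.Tendsto (fun i => ∑ z ∈ Z, ENNReal.ofReal |c (φ i) (N, z) - cinf (N, z)|
      * volume (cell n N z)) Filter.atTop (nhds 0) := by
    have : (0:ℝ≥0∞) = ∑ z ∈ Z, 0 := by simp
    rw [this]
    refine tendsto_finsetSum _ fun z _ => ?_
    have h1 : Filter.Tendsto (fun i => |c (φ i) (N, z) - cinf (N, z)|) Filter.atTop (nhds 0) := by
      have := ((hlim (N, z)).sub_const (cinf (N, z))).abs
      simpa using this
    have := ENNReal.Tendsto.mul_const (b := volume (cell n N z)) (ENNReal.tendsto_ofReal h1)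
      (Or.inr (hvt N z))
    simpa using this
  filter_upwards [htail.eventually (ge_mem_nhds hε2)] with i hi
  calc ∫⁻ x in ball 0 R, ENNReal.ofReal |f (φ i) x - cinf (N, cellIdx n N x)|
      ≤ ∫⁻ x in ⋃ z ∈ Z, cell n N z, ENNReal.ofReal |f (φ i) x - cinf (N, cellIdx n N x)| :=
        lintegral_mono_set hZ1
    _ = ∑ z ∈ Z, ∫⁻ x in cell n N z, ENNReal.ofReal |f (φ i) x - cinf (N, cellIdx n N x)| :=
        lintegral_biUnion_finset hdisj hmeas _
    _ ≤ ∑ z ∈ Z, ((∫⁻ x in cell n N z, ENNReal.ofReal |f (φ i) x - c (φ i) (N, z)|) +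
          ENNReal.ofReal |c (φ i) (N, z) - cinf (N, z)| * volume (cell n N z)) := by
        refine Finset.sum_le_sum fun z hz => ?_
        have : ENNReal.ofReal |c (φ i) (N, z) - cinf (N, z)| * volume (cell n N z)
          = ∫⁻ x in cell n N z, ENNReal.ofReal |c (φ i) (N, z) - cinf (N, z)| := by simp
        rw [this, ← lintegral_add_right _ measurable_const]
        refine setLIntegral_mono' (hmeas z hz) fun x hx => ?_
        rw [mem_cell_iff] at hx
        rw [hx, ← ENNReal.ofReal_add (abs_nonneg _) (abs_nonneg _)]
        exact ENNReal.ofReal_le_ofReal (abs_sub_le _ _ _)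
    _ = (∑ z ∈ Z, ∫⁻ x in cell n N z, ENNReal.ofReal |f (φ i) x - c (φ i) (N, z)|) +
          ∑ z ∈ Z, ENNReal.ofReal |c (φ i) (N, z) - cinf (N, z)| * volume (cell n N z) :=
        Finset.sum_add_distrib
    _ ≤ ENNReal.ofReal (ε / 2) + ENNReal.ofReal (ε / 2) := by
        refine add_le_add ?_ hi
        refine le_trans ?_ hN
        calc _ ≤ ∑ z ∈ Z, ENNReal.ofReal (δ N) *
              ((∫⁻ x in cell n N z, ENNReal.ofReal (g (φ i) x) ^ q)
                + volume (cell n N z)) ^ (1 / q) :=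
              Finset.sum_le_sum fun z _ => hc (φ i) (N, z)
          _ ≤ ENNReal.ofReal (δ N) * (∑ z ∈ Z, ((∫⁻ x in cell n N z,
                ENNReal.ofReal (g (φ i) x) ^ q) + volume (cell n N z))) ^ (1 / q) := by
              rw [← Finset.mul_sum]
              gcongr
              exact sum_rpow_le _ _ _ (by rw [le_div_iff₀ hq0]; linarith)
          _ ≤ ENNReal.ofReal (δ N) * B := by
              rw [hB, Finset.sum_add_distrib, ← lintegral_biUnion_finset hdisj hmeas,
                ← measure_biUnion_finset hdisj hmeas]
              have hle : volume (⋃ z ∈ Z, cell n N z) ≤ V := measure_mono hZ2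
              gcongr
              exact (hgS (φ i) _).trans (by gcongr)
    _ = ENNReal.ofReal ε := by
        rw [← ENNReal.ofReal_add (by positivity) (by positivity)]; simp

/-- **Corollary 2.9.** Weak compactness of norm-bounded sets in `M^{1,p}(ℝⁿ)`,
`p > n/(n+1)`: a sequence bounded in the `M^{1,p}` norm has a subsequence converging in
`L¹_loc` to a function of `M^{1,p}(ℝⁿ)`. -/
theorem hajlasz_sobolev_weak_compactness
    (n : ℕ) (hn : 1 ≤ n) (p : ℝ) (hp : (n : ℝ) / (n + 1) < p) (K : ℝ)
    (f : ℕ → EuclideanSpace ℝ (Fin n) → ℝ)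
    (hfloc : ∀ k, LocallyIntegrable (f k))
    (g : ℕ → EuclideanSpace ℝ (Fin n) → ℝ)
    (hg : ∀ k, IsHajlaszGradientOn n (f k) (g k) univ)
    (hbdd : ∀ k, lpNorm n p (f k) volume + lpNorm n p (g k) volume ≤ ENNReal.ofReal K) :
    ∃ F : EuclideanSpace ℝ (Fin n) → ℝ,
      AEStronglyMeasurable F volume ∧ lpNorm n p F volume ≠ ⊤ ∧
      (∃ G, IsHajlaszGradientOn n F G univ ∧ lpNorm n p G volume ≠ ⊤) ∧
      ∃ k : ℕ → ℕ, StrictMono k ∧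
        ∀ (x₀ : EuclideanSpace ℝ (Fin n)) (r : ℝ),
          Filter.Tendsto
            (fun ℓ => ∫⁻ y in ball x₀ r, ENNReal.ofReal |f (k ℓ) y - F y|)
            Filter.atTop (nhds 0) := by
  have hp0 : 0 < p := lt_of_le_of_lt (by positivity) hp
  have hn1 : (n : ℝ) / (n + 1) < 1 := by
    rw [div_lt_one (by positivity)]; linarith
  -- choose the auxiliary exponent
  obtain ⟨q, hq, hq1, hqp⟩ : ∃ q : ℝ, (n : ℝ) / (n + 1) < q ∧ q < 1 ∧ q ≤ p := by
    obtain ⟨q, h1, h2⟩ := exists_between (lt_min hp hn1)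
    exact ⟨q, h1, h2.trans_le (min_le_right _ _), (h2.trans_le (min_le_left _ _)).le⟩
  set M : ℝ≥0∞ := ENNReal.ofReal K ^ p with hMd
  have hM : M ≠ ⊤ := ENNReal.rpow_ne_top_of_nonneg hp0.le ENNReal.ofReal_ne_top
  have hconv : ∀ u : EuclideanSpace ℝ (Fin n) → ℝ, _root_.lpNorm n p u volume ≤ ENNReal.ofReal K →
      ∫⁻ x, ENNReal.ofReal |u x| ^ p ≤ M := by
    intro u hu
    unfold _root_.lpNorm at hu
    rw [one_div, ENNReal.rpow_inv_le_iff hp0] at hu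
    exact hu
  have hfM : ∀ k, ∫⁻ x, ENNReal.ofReal |f k x| ^ p ≤ M := fun k =>
    hconv _ (le_self_add.trans (hbdd k))
  have hgM : ∀ k, ∫⁻ x, ENNReal.ofReal |g k x| ^ p ≤ M := fun k =>
    hconv _ (le_add_self.trans (hbdd k))
  have hfm : ∀ k, AEStronglyMeasurable (f k) volume := fun k => (hfloc k).aestronglyMeasurable
  have hdm : ∀ i (s : EuclideanSpace ℝ (Fin n) → ℝ), AEMeasurable s volume →
      AEMeasurable (fun x => ENNReal.ofReal |f i x - s x|) volume := by
    intro i s hs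
    have h1 : AEMeasurable (fun x => |f i x - s x|) volume :=
      measurable_norm.comp_aemeasurable ((hfm i).aemeasurable.sub hs)
    exact h1.ennreal_ofReal
  obtain ⟨φ, hφ, hstep⟩ := exists_cauchy_subseq n hn p q hq hq1 hqp f hfm g hg M hM hfM hgM
  have hcau : ∀ (R ε : ℝ), 0 < ε → ∀ᶠ k in Filter.atTop, ∀ i j, k ≤ i → k ≤ j →
      ∫⁻ x in ball 0 R, ENNReal.ofReal |f (φ i) x - f (φ j) x| ≤ ENNReal.ofReal ε := by
    intro R ε hε
    obtain ⟨s, hs, hev⟩ := hstep R (ε / 2) (by positivity)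
    obtain ⟨k0, hk0⟩ := Filter.eventually_atTop.1 hev
    filter_upwards [Filter.eventually_ge_atTop k0] with k hk i j hi hj
    calc _ ≤ ∫⁻ x in ball 0 R, (ENNReal.ofReal |f (φ i) x - s x| +
            ENNReal.ofReal |f (φ j) x - s x|) := by
          refine lintegral_mono fun x => ?_
          rw [← ENNReal.ofReal_add (abs_nonneg _) (abs_nonneg _)]
          refine ENNReal.ofReal_le_ofReal ?_
          rw [abs_sub_comm (f (φ j) x)]
          exact abs_sub_le _ _ _
      _ = _ := lintegral_add_left' (hdm (φ i) s hs.aemeasurable).restrict _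
      _ ≤ ENNReal.ofReal (ε / 2) + ENNReal.ofReal (ε / 2) :=
          add_le_add (hk0 i (hk.trans hi)) (hk0 j (hk.trans hj))
      _ = _ := by rw [← ENNReal.ofReal_add (by positivity) (by positivity)]; simp
  -- fast subsequence
  obtain ⟨ψ, hψ, hfast⟩ := Filter.extraction_forall_of_eventually
    (fun m : ℕ => hcau (m : ℝ) ((1 / 2 : ℝ) ^ m) (by positivity))
  set k : ℕ → ℕ := φ ∘ ψ with hk
  have hkm : StrictMono k := hφ.comp hψ
  have hae : ∀ᵐ x, ∃ l, Filter.Tendsto (fun i => f (k i) x) Filter.atTop (nhds l) := by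
    have hR : ∀ R : ℕ, ∀ᵐ x, x ∈ ball (0 : EuclideanSpace ℝ (Fin n)) R →
        ∃ l, Filter.Tendsto (fun i => f (k i) x) Filter.atTop (nhds l) := by
      intro R
      rw [← ae_restrict_iff' measurableSet_ball]
      have hsum : ∑' N : ℕ, ENNReal.ofReal (2 * (1 / 2 : ℝ) ^ N) ≠ ⊤ :=
        (summable_geometric_two.mul_left 2).tsum_ofReal_ne_top
      have := Lp.ae_tendsto_of_cauchy_eLpNorm (μ := volume.restrict (ball 0 (R : ℝ)))
        (f := fun i => f (k (i + R))) (p := 1) (fun i => (hfm _).restrict) le_rfl hsum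
        (by
          intro N a b ha hb
          rw [eLpNorm_one_eq_lintegral_enorm]
          have h1 := hfast (R + N) (ψ (a + R)) (ψ (b + R)) (hψ.monotone (by omega))
            (hψ.monotone (by omega))
          have h2 : ∫⁻ x in ball 0 (R : ℝ), ‖(f (k (a + R)) - f (k (b + R))) x‖ₑ
              ≤ ENNReal.ofReal ((1 / 2 : ℝ) ^ (R + N)) := by
            refine le_trans ?_ h1
            simp only [Pi.sub_apply, Real.enorm_eq_ofReal_abs]
            refine lintegral_mono_set (ball_subset_ball ?_)
            push_cast
            have : (0:ℝ) ≤ N := by positivity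
            linarith
          refine h2.trans_lt ((ENNReal.ofReal_lt_ofReal_iff (by positivity)).2 ?_)
          rw [pow_add]
          have h3 : (1 / 2 : ℝ) ^ R ≤ 1 := pow_le_one₀ (by norm_num) (by norm_num)
          have h4 : 0 < (1 / 2 : ℝ) ^ N := by positivity
          nlinarith)
      filter_upwards [this] with x hx
      obtain ⟨l, hl⟩ := hx
      exact ⟨l, (Filter.tendsto_add_atTop_iff_nat (f := fun i => f (k i) x) R).1 hl⟩
    filter_upwards [ae_all_iff.2 hR] with x hx
    obtain ⟨R, hR⟩ := exists_nat_gt ‖x‖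
    exact hx R (mem_ball_zero_iff.2 hR)
  obtain ⟨F, hFm, hFlim⟩ := exists_stronglyMeasurable_limit_of_tendsto_ae (fun i => hfm (k i)) hae
  refine ⟨F, hFm.aestronglyMeasurable, ?_, ?_, k, hkm, ?_⟩
  · unfold _root_.lpNorm
    refine ENNReal.rpow_ne_top_of_nonneg (by positivity) (ne_top_of_le_ne_top hM ?_)
    calc ∫⁻ x, ENNReal.ofReal |F x| ^ p
        = ∫⁻ x, Filter.liminf (fun i => ENNReal.ofReal |f (k i) x| ^ p) Filter.atTop := by
          refine lintegral_congr_ae ?_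
          filter_upwards [hFlim] with x hx
          exact ((ENNReal.tendsto_ofReal hx.abs).ennrpow_const p).liminf_eq.symm
      _ ≤ Filter.liminf (fun i => ∫⁻ x, ENNReal.ofReal |f (k i) x| ^ p) Filter.atTop := by
          refine lintegral_liminf_le' fun i => ?_
          have h2 : AEMeasurable (fun x => |f (k i) x|) volume :=
            measurable_norm.comp_aemeasurable (hfm (k i)).aemeasurable
          exact h2.ennreal_ofReal.pow_const p
      _ ≤ Filter.liminf (fun _ : ℕ => M) Filter.atTop :=
          Filter.liminf_le_liminf (Filter.Eventually.of_forall fun i => hfM (k i))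
      _ = M := Filter.liminf_const M
  · exact exists_limit_gradient n p hp0 (fun i => f (k i)) (fun i => g (k i)) F
      (fun i => hg (k i)) M hM (fun i => hgM (k i)) hFlim
  · intro x₀ r
    rw [ENNReal.tendsto_nhds_zero]
    intro ε hε
    obtain ⟨ε', hε', hε'2⟩ : ∃ ε' : ℝ, 0 < ε' ∧ ENNReal.ofReal ε' ≤ ε := by
      rcases eq_or_ne ε ⊤ with rfl | ht
      · exact ⟨1, one_pos, le_top⟩
      · exact ⟨ε.toReal, ENNReal.toReal_pos hε.ne' ht, by rw [ENNReal.ofReal_toReal ht]⟩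
    obtain ⟨m, hm⟩ := (hcau (‖x₀‖ + r) ε' hε').exists
    filter_upwards [Filter.eventually_ge_atTop m] with i hi
    refine le_trans ?_ hε'2
    have hsub : ball x₀ r ⊆ ball 0 (‖x₀‖ + r) := by
      intro y hy
      rw [mem_ball, dist_eq_norm] at hy
      rw [mem_ball_zero_iff]
      have : ‖y‖ ≤ ‖y - x₀‖ + ‖x₀‖ := by simpa using norm_add_le (y - x₀) x₀
      linarith
    refine (lintegral_mono_set hsub).trans ?_
    calc ∫⁻ y in ball 0 (‖x₀‖ + r), ENNReal.ofReal |f (k i) y - F y|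
        = ∫⁻ y in ball 0 (‖x₀‖ + r),
            Filter.liminf (fun j => ENNReal.ofReal |f (k i) y - f (k j) y|) Filter.atTop := by
          refine lintegral_congr_ae (ae_restrict_of_ae ?_)
          filter_upwards [hFlim] with x hx
          exact (ENNReal.tendsto_ofReal (hx.const_sub (f (k i) x)).abs).liminf_eq.symm
      _ ≤ Filter.liminf (fun j => ∫⁻ y in ball 0 (‖x₀‖ + r),
            ENNReal.ofReal |f (k i) y - f (k j) y|) Filter.atTop :=
          lintegral_liminf_le' fun j => (hdm (k i) (f (k j)) (hfm (k j)).aemeasurable).restrict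
      _ ≤ Filter.liminf (fun _ : ℕ => ENNReal.ofReal ε') Filter.atTop := by
          refine Filter.liminf_le_liminf ?_
          filter_upwards [Filter.eventually_ge_atTop m] with j hj
          exact hm (ψ i) (ψ j) (hi.trans (hψ.id_le i)) (hj.trans (hψ.id_le j))
      _ = ENNReal.ofReal ε' := Filter.liminf_const _
end
end
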